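/- There exists a universal constant ξ with 0 < ξ ≤ 1 such that the following holds. If k = k(n) and p = p(n) > 0 are sequences satisfying k = ω(log n) and n/k ≥ p·C(n−1, k−1) = ω(log³ n), then with high probability (probability tending to 1 as n → ∞) the random hypergraph G^k(n,p) is ξ-expanding. -/

import Mathlib

/-!
Put `D = p * (n-1).choose (k-1)`. A union bound shows that, outside an event of probability at most
`4 / n`, the degrees are at most `(1 + 1 / log n) * D` and every vertex set `A` with
`#A * D * k ≤ n` meets at least `(1 - 2 / log n) * #A * D` edges, by Chernoff bounds, and that
edges overlap little: if `b` edges cover only `s` vertices, then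
`(s / n) ^ (k * b - s) ≥ exp (-2 * k * b)`, because there are at most
`n.choose s * (s.choose k).choose b` families of `b` edges covered by `s` vertices.

These properties imply expansion. For `b` edges with `k * b * exp lam ≤ n` the overlap estimate
gives a cover of size at least `(1 - 2 / lam) * k * b`, so a ball that is still far from filling the
vertex set grows by a factor `(1 - 2 / log n - 2 / lam) * D * k` in one step. Since
`log (n / volume)` decreases by `log (D * k)` per step, the losses `2 / lam` add up to a harmonic
sum of order `log (log n) / log (D * k)`; this is bounded because `D * k` is at least a power of
`log n`, so the product of all growth factors stays within a constant of `(D * k) ^ r`. The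
average degree `d` is `(1 + O(1 / log n)) * D * k` as soon as `(D * k) ^ 2 ≤ n`, whereas otherwise
`d ^ r ≤ n` only for `r ≤ 2` and the crude bound `D * k / 512 ≤ d` suffices; either way the powers
of `d` are comparable to those of `D * k` in the relevant range.
-/

open scoped BigOperators

/-- A `k`-uniform hypergraph on vertex set `Fin n`. -/
structure KGraph (n k : ℕ) where
  edges : Finset (Finset (Fin n))
  uniform : ∀ e ∈ edges, e.card = k

namespace KGraph

variable {n k : ℕ}

/-- A loose path of edges from `x` to `y`: a nonempty list of edges, the first containing `x`,
the last containing `y`, with consecutive edges intersecting. -/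
def IsLoosePath (G : KGraph n k) (x y : Fin n) (l : List (Finset (Fin n))) : Prop :=
  l ≠ [] ∧ (∀ e ∈ l, e ∈ G.edges) ∧ (∀ e ∈ l.head?, x ∈ e) ∧
    (∀ e ∈ l.getLast?, y ∈ e) ∧ l.Chain' (fun e f => (e ∩ f).Nonempty)

/-- Distance between two vertices: the smallest length of a loose path between them
(`0` if they are equal, `⊤` if there is no such path). -/
noncomputable def dist (G : KGraph n k) (x y : Fin n) : ℕ∞ :=
  if x = y then 0
  else sInf ((fun l : List (Finset (Fin n)) => (l.length : ℕ∞)) '' {l | G.IsLoosePath x y l})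

/-- Distance between two sets of vertices: the minimum over pairs. -/
noncomputable def setDist (G : KGraph n k) (A B : Set (Fin n)) : ℕ∞ :=
  ⨅ (x ∈ A) (y ∈ B), G.dist x y

/-- The closed `r`-th vertex-neighbourhood of a set of vertices. -/
noncomputable def vNhd (G : KGraph n k) (A : Set (Fin n)) (r : ℕ) : Set (Fin n) :=
  {v | G.setDist A {v} ≤ (r : ℕ∞)}

/-- The set of vertices covered by a set of edges. -/
def VB (B : Set (Finset (Fin n))) : Set (Fin n) :=
  ⋃ e ∈ B, (e : Set (Fin n))

/-- The closed `r`-th vertex-neighbourhood of a set of edges. -/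
noncomputable def vNhdE (G : KGraph n k) (B : Set (Finset (Fin n))) (r : ℕ) : Set (Fin n) :=
  G.vNhd (VB B) r

/-- The closed `r`-th edge-neighbourhood of a set of vertices: edges within distance `r - 1`. -/
noncomputable def eNhd (G : KGraph n k) (A : Set (Fin n)) (r : ℕ) : Set (Finset (Fin n)) :=
  {e | e ∈ G.edges ∧ G.setDist (e : Set (Fin n)) A ≤ ((r - 1 : ℕ) : ℕ∞)}

/-- The average vertex degree of `G`. -/
noncomputable def avgDeg (G : KGraph n k) : ℝ :=
  (∑ v : Fin n, ((G.vNhd {v} 1).ncard : ℝ)) / n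

/-- A `k`-graph on `n` vertices with average vertex degree `d ≥ k` is `ξ`-expanding if
(A.1) edge-neighbourhoods of vertices are not too large, (A.2) vertex-neighbourhoods of vertex
sets have size comparable to `|A| d^r`, and (A.3) vertex-neighbourhoods of edge sets are large. -/
def IsExpanding (G : KGraph n k) (ξ : ℝ) : Prop :=
  (k : ℝ) ≤ G.avgDeg ∧
  (∀ v : Fin n, ∀ r : ℕ, 1 ≤ r → G.avgDeg ^ r ≤ Real.sqrt ((n : ℝ) * k) →
    ((G.eNhd {v} r).ncard : ℝ) ≤ ξ⁻¹ * G.avgDeg ^ r / k) ∧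
  (∀ A : Set (Fin n), ∀ r : ℕ, 1 ≤ r →
    ξ * min ((A.ncard : ℝ) * G.avgDeg ^ r) (n : ℝ) ≤ ((G.vNhd A r).ncard : ℝ) ∧
    ((G.vNhd A r).ncard : ℝ) ≤ ξ⁻¹ * (A.ncard : ℝ) * G.avgDeg ^ r) ∧
  (∀ B : Set (Finset (Fin n)), B ⊆ (G.edges : Set (Finset (Fin n))) → ∀ r : ℕ, 1 ≤ r →
    ξ * min ((B.ncard : ℝ) * k * G.avgDeg ^ r) (n : ℝ) ≤ ((G.vNhdE B r).ncard : ℝ))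

/-- `CopsWin G c r` : with the cops currently on the vertices `c i`, the robber on `r`, and the
cops to move, the cops have a strategy to catch the robber. Either a cop is already on the
robber's vertex; or the cops can move (each by distance at most 1) so that a cop lands on the
robber; or the cops can move so that whatever the robber's reply, the cops still win. -/
inductive CopsWin (G : KGraph n k) {m : ℕ} : (Fin m → Fin n) → Fin n → Prop
  | caught (c : Fin m → Fin n) (r : Fin n) (i : Fin m) (h : c i = r) : CopsWin G c r
  | stepCaught (c c' : Fin m → Fin n) (r : Fin n)
      (hmove : ∀ i, G.dist (c i) (c' i) ≤ 1) (i : Fin m) (h : c' i = r) : CopsWin G c r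
  | step (c c' : Fin m → Fin n) (r : Fin n)
      (hmove : ∀ i, G.dist (c i) (c' i) ≤ 1)
      (h : ∀ r' : Fin n, G.dist r r' ≤ 1 → CopsWin G c' r') : CopsWin G c r

/-- The cop number of `G` : the least `m` such that `m` cops can be initially placed so as to
catch the robber wherever he starts. -/
noncomputable def copNumber (G : KGraph n k) : ℕ :=
  sInf {m : ℕ | ∃ c₀ : Fin m → Fin n, ∀ r₀ : Fin n, CopsWin G c₀ r₀}

/-- `G` is connected if all pairs of vertices are at finite distance. -/
def Connected (G : KGraph n k) : Prop := ∀ x y : Fin n, G.dist x y ≠ ⊤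

end KGraph

open Classical in
/-- The probability that the binomial random `k`-uniform hypergraph `G^k(n,p)` (each `k`-subset
of `[n]` an edge independently with probability `p`) satisfies the property `Q`. -/
noncomputable def ghProb (n k : ℕ) (p : ℝ) (Q : KGraph n k → Prop) : ℝ :=
  ∑ E ∈ (Finset.powersetCard k (Finset.univ : Finset (Fin n))).powerset,
    if h : ∀ e ∈ E, e.card = k then
      (if Q ⟨E, h⟩ then
        p ^ E.card * (1 - p) ^ ((Finset.powersetCard k (Finset.univ : Finset (Fin n))).card - E.card)
      else 0)
    else 0

section Elementary

open Filter Finset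

lemma exp_two_mul_le_eight_pow (m : ℕ) : Real.exp (2 * m) ≤ 8 ^ m := by
  have exp_two_le : Real.exp 2 ≤ 8 := by
    rw [show (2 : ℝ) = 1 + 1 by norm_num, Real.exp_add]
    nlinarith [Real.exp_one_lt_d9, Real.exp_pos 1]
  rw [mul_comm, Real.exp_nat_mul]
  gcongr

lemma eventually_const_mul_le_of_tendsto_div_atTop {α : Type*} {F : Filter α} {f g : α → ℝ}
    (h : Tendsto (fun a ↦ f a / g a) F atTop) (hg : ∀ᶠ a in F, 0 < g a) (c : ℝ) :
    ∀ᶠ a in F, c * g a ≤ f a := by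
  filter_upwards [h.eventually_ge_atTop c, hg] with a hc hpos
  exact (le_div_iff₀ hpos).1 hc

lemma natCast_mul_log_le_log_of_pow_le {x y : ℝ} (hx : 0 < x) {r : ℕ} (h : x ^ r ≤ y) :
    r * Real.log x ≤ Real.log y := by
  simpa only [Real.log_pow] using Real.log_le_log (pow_pos hx r) h

lemma mul_min_le_min_mul_right {a b c : ℝ} (ha : 0 ≤ a) (hc0 : 0 ≤ c) (hc1 : c ≤ 1) :
    c * min a b ≤ min a (c * b) := by
  rw [mul_min_of_nonneg _ _ hc0]
  exact min_le_min_right _ (mul_le_of_le_one_left ha hc1)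

lemma exists_subset_nonempty_card_le_min_le {α : Type*} {s : Finset α} (hs : s.Nonempty) {x : ℝ}
    (hx : 1 ≤ x) : ∃ t ⊆ s, t.Nonempty ∧ (#t : ℝ) ≤ x ∧ min (#s : ℝ) (x / 2) ≤ #t := by
  have one_le_floor : 1 ≤ ⌊x⌋₊ := Nat.le_floor (by simpa using hx)
  obtain ⟨t, hts, ht⟩ := exists_subset_card_eq (s := s) (min_le_left #s ⌊x⌋₊)
  have half_le_floor : x / 2 ≤ ⌊x⌋₊ := by
    have : (1 : ℝ) ≤ ⌊x⌋₊ := mod_cast one_le_floor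
    linarith [Nat.lt_floor_add_one x]
  refine ⟨t, hts, ?_, ?_, ?_⟩
  · exact card_pos.1 (ht ▸ lt_min hs.card_pos one_le_floor)
  · exact (Nat.cast_le.2 (ht ▸ min_le_right _ _)).trans (Nat.floor_le (by linarith))
  · rw [ht, Nat.cast_min]
    exact min_le_min_left _ half_le_floor

lemma descFactorial_mul_pow_le_pow_mul_descFactorial {s n : ℕ} (h : s ≤ n) (k : ℕ) :
    s.descFactorial k * n ^ k ≤ s ^ k * n.descFactorial k := by
  induction k with
  | zero => simp
  | succ k ih =>
    have factor : (s - k) * n ≤ s * (n - k) := by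
      rw [Nat.sub_mul, Nat.mul_sub, mul_comm s k]
      exact Nat.sub_le_sub_left (Nat.mul_le_mul_left k h) _
    calc s.descFactorial (k + 1) * n ^ (k + 1)
        = ((s - k) * n) * (s.descFactorial k * n ^ k) := by
          rw [Nat.descFactorial_succ]; ring
      _ ≤ (s * (n - k)) * (s ^ k * n.descFactorial k) := Nat.mul_le_mul factor ih
      _ = s ^ (k + 1) * n.descFactorial (k + 1) := by rw [Nat.descFactorial_succ]; ring

lemma choose_le_div_pow_mul_choose {s n : ℕ} (h : s ≤ n) (k : ℕ) :
    (s.choose k : ℝ) ≤ ((s : ℝ) / n) ^ k * n.choose k := by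
  rcases n.eq_zero_or_pos with rfl | hn
  · obtain rfl := Nat.le_zero.1 h
    cases k <;> simp
  have key : s.choose k * n ^ k ≤ s ^ k * n.choose k := by
    refine Nat.le_of_mul_le_mul_left ?_ k.factorial_pos
    have := descFactorial_mul_pow_le_pow_mul_descFactorial h k
    simp only [Nat.descFactorial_eq_factorial_mul_choose] at this
    linarith
  rw [div_pow, div_mul_eq_mul_div, le_div_iff₀ (by positivity)]
  exact_mod_cast key

lemma choose_le_exp_mul_div_pow (n s : ℕ) : (n.choose s : ℝ) ≤ Real.exp s * ((n : ℝ) / s) ^ s := by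
  rcases s.eq_zero_or_pos with rfl | hs
  · simp
  calc (n.choose s : ℝ) ≤ (n : ℝ) ^ s / s.factorial := Nat.choose_le_pow_div s n
    _ = (s : ℝ) ^ s / s.factorial * ((n : ℝ) / s) ^ s := by rw [div_pow]; field_simp
    _ ≤ Real.exp s * ((n : ℝ) / s) ^ s := by
      gcongr
      exact Real.pow_div_factorial_le_exp _ s.cast_nonneg s

lemma succ_le_succ_mul_choose {m j : ℕ} (hj : 0 < j) (hjm : j ≤ m) :
    m + 1 ≤ (j + 1) * m.choose j := by
  induction m, hjm using Nat.le_induction with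
  | base => simp
  | succ m hjm ih =>
    have pos : 0 < m.choose (j - 1) := Nat.choose_pos (by lia)
    rw [Nat.choose_succ_left m j hj, mul_add]
    nlinarith

end Elementary

/-! ### Binomial random subsets -/

section BinomialSubset

open Finset

/-- The probability that the `p`-random subset of `s`, which contains each element of `s`
independently with probability `p`, equals `t`. -/
def binomialWeight {α : Type*} (s : Finset α) (p : ℝ) (t : Finset α) : ℝ :=
  p ^ #t * (1 - p) ^ (#s - #t)

open Classical in
/-- The probability that the `p`-random subset of `s` has the property `P`, as a finite sum over
the subsets of `s`. -/
noncomputable def binomialProb {α : Type*} (s : Finset α) (p : ℝ) (P : Finset α → Prop) : ℝ :=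
  ∑ t ∈ s.powerset with P t, binomialWeight s p t

variable {α ι : Type*} {s S F : Finset α} {p : ℝ} {P Q : Finset α → Prop}

lemma binomialWeight_nonneg (h0 : 0 ≤ p) (h1 : p ≤ 1) (t : Finset α) :
    0 ≤ binomialWeight s p t :=
  mul_nonneg (pow_nonneg h0 _) (pow_nonneg (sub_nonneg.2 h1) _)

lemma sum_binomialWeight_mul_prod_mul_prod [DecidableEq α] (s : Finset α) (p : ℝ) (f g : α → ℝ) :
    ∑ t ∈ s.powerset, binomialWeight s p t * ((∏ i ∈ t, f i) * ∏ i ∈ s \ t, g i) =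
      ∏ i ∈ s, (p * f i + (1 - p) * g i) := by
  rw [prod_add]
  refine sum_congr rfl fun t ht ↦ ?_
  rw [prod_mul_distrib, prod_mul_distrib, prod_const, prod_const,
    card_sdiff_of_subset (mem_powerset.1 ht), binomialWeight]
  ring

lemma binomialProb_true (s : Finset α) (p : ℝ) : binomialProb s p (fun _ ↦ True) = 1 := by
  classical
  have := sum_binomialWeight_mul_prod_mul_prod s p (fun _ ↦ 1) (fun _ ↦ 1)
  simpa [binomialProb] using this

lemma binomialProb_mono (h0 : 0 ≤ p) (h1 : p ≤ 1) (h : ∀ t ⊆ s, P t → Q t) :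
    binomialProb s p P ≤ binomialProb s p Q := by
  classical
  refine sum_le_sum_of_subset_of_nonneg (fun t ht ↦ ?_)
    fun t _ _ ↦ binomialWeight_nonneg h0 h1 t
  rw [mem_filter, mem_powerset] at ht ⊢
  exact ⟨ht.1, h t ht.1 ht.2⟩

lemma binomialProb_le_one (h0 : 0 ≤ p) (h1 : p ≤ 1) : binomialProb s p P ≤ 1 :=
  (binomialProb_mono h0 h1 fun _ _ _ ↦ trivial).trans_eq (binomialProb_true s p)

lemma binomialProb_add_binomialProb_not (s : Finset α) (p : ℝ) (P : Finset α → Prop) :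
    binomialProb s p P + binomialProb s p (fun t ↦ ¬ P t) = 1 := by
  classical
  rw [← binomialProb_true s p, binomialProb, binomialProb, sum_filter_add_sum_filter_not]
  simp [binomialProb]

lemma binomialProb_exists_le_sum (h0 : 0 ≤ p) (h1 : p ≤ 1) (I : Finset ι)
    (P : ι → Finset α → Prop) :
    binomialProb s p (fun t ↦ ∃ i ∈ I, P i t) ≤ ∑ i ∈ I, binomialProb s p (P i) := by
  classical
  simp only [binomialProb, sum_filter]
  rw [sum_comm]
  refine sum_le_sum fun t _ ↦ ?_
  have nonneg (i : ι) : 0 ≤ if P i t then binomialWeight s p t else 0 := by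
    split_ifs
    exacts [binomialWeight_nonneg h0 h1 t, le_rfl]
  split_ifs with ht
  · obtain ⟨i, hi, hit⟩ := ht
    exact (if_pos hit).ge.trans (single_le_sum (fun i _ ↦ nonneg i) hi)
  · exact sum_nonneg fun i _ ↦ nonneg i

lemma binomialProb_exists_le_card_mul (h0 : 0 ≤ p) (h1 : p ≤ 1) {I : Finset ι}
    {P : ι → Finset α → Prop} {c : ℝ} (hc : ∀ i ∈ I, binomialProb s p (P i) ≤ c) :
    binomialProb s p (fun t ↦ ∃ i ∈ I, P i t) ≤ #I * c := by
  rw [← nsmul_eq_mul]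
  exact (binomialProb_exists_le_sum h0 h1 I P).trans (sum_le_card_nsmul _ _ _ hc)

lemma binomialProb_or_le (h0 : 0 ≤ p) (h1 : p ≤ 1) :
    binomialProb s p (fun t ↦ P t ∨ Q t) ≤ binomialProb s p P + binomialProb s p Q := by
  have := binomialProb_exists_le_sum (s := s) h0 h1 univ fun b : Bool ↦ if b then P else Q
  simpa [or_comm] using this

lemma binomialProb_superset (hF : F ⊆ s) :
    binomialProb s p (fun t ↦ F ⊆ t) = p ^ #F := by
  classical
  have indicator (t : Finset α) : F ⊆ t ↔ ∀ i ∈ s \ t, i ∉ F := by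
    simp only [mem_sdiff, subset_iff]
    exact ⟨fun h i hi hiF ↦ hi.2 (h hiF), fun h i hi ↦ not_not.1 fun hit ↦ h i ⟨hF hi, hit⟩ hi⟩
  have factor (i : α) : p * 1 + (1 - p) * (if i ∉ F then 1 else 0) = if i ∈ F then p else 1 := by
    split_ifs <;> ring
  calc binomialProb s p (fun t ↦ F ⊆ t)
      = ∑ t ∈ s.powerset,
          binomialWeight s p t * ((∏ _i ∈ t, 1) * ∏ i ∈ s \ t, if i ∉ F then 1 else 0) := by
        simp only [binomialProb, sum_filter, prod_const_one, prod_boole, ← indicator, mul_ite,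
          mul_one, mul_zero]
    _ = p ^ #F := by
        rw [sum_binomialWeight_mul_prod_mul_prod]
        simp only [factor, prod_ite_mem, inter_eq_right.2 hF, prod_const]

lemma sum_binomialWeight_mul_pow_card_inter [DecidableEq α] (hS : S ⊆ s) (p x : ℝ) :
    ∑ t ∈ s.powerset, binomialWeight s p t * x ^ #(t ∩ S) = (1 - p + p * x) ^ #S := by
  have factor (i : α) : p * (if i ∈ S then x else 1) + (1 - p) * 1 =
      if i ∈ S then 1 - p + p * x else 1 := by
    split_ifs <;> ring
  calc ∑ t ∈ s.powerset, binomialWeight s p t * x ^ #(t ∩ S)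
      = ∑ t ∈ s.powerset,
          binomialWeight s p t * ((∏ i ∈ t, if i ∈ S then x else 1) * ∏ _i ∈ s \ t, 1) := by
        simp only [prod_ite_mem, prod_const, one_pow, mul_one]
    _ = (1 - p + p * x) ^ #S := by
        rw [sum_binomialWeight_mul_prod_mul_prod]
        simp only [factor, prod_ite_mem, inter_eq_right.2 hS, prod_const]

lemma one_sub_add_mul_exp_le_exp {p τ : ℝ} (h0 : 0 ≤ p) (hτ : |τ| ≤ 1) :
    1 - p + p * Real.exp τ ≤ Real.exp (p * (τ + τ ^ 2)) := by
  have taylor := (abs_le.1 (Real.abs_exp_sub_one_sub_id_le hτ)).2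
  have := Real.add_one_le_exp (p * (τ + τ ^ 2))
  nlinarith

lemma binomialProb_le_exp_of_mul_le_mul_card_inter [DecidableEq α] (h0 : 0 ≤ p) (h1 : p ≤ 1)
    (hS : S ⊆ s) {τ x : ℝ} (hτ : |τ| ≤ 1) (hP : ∀ t, P t → τ * x ≤ τ * #(t ∩ S)) :
    binomialProb s p P ≤ Real.exp (-(τ * x) + p * #S * (τ + τ ^ 2)) := by
  classical
  have markov (t : Finset α) : (if P t then binomialWeight s p t else 0) ≤
      Real.exp (-(τ * x)) * (binomialWeight s p t * Real.exp τ ^ #(t ∩ S)) := by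
    have weight_nonneg := binomialWeight_nonneg (s := s) h0 h1 t
    split_ifs with ht
    · rw [mul_left_comm, ← Real.exp_nat_mul, ← Real.exp_add]
      refine le_mul_of_one_le_right weight_nonneg (Real.one_le_exp ?_)
      linarith [hP t ht]
    · positivity
  calc binomialProb s p P
      ≤ ∑ t ∈ s.powerset,
          Real.exp (-(τ * x)) * (binomialWeight s p t * Real.exp τ ^ #(t ∩ S)) := by
        rw [binomialProb, sum_filter]
        exact sum_le_sum fun t _ ↦ markov t
    _ = Real.exp (-(τ * x)) * (1 - p + p * Real.exp τ) ^ #S := by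
        rw [← mul_sum, sum_binomialWeight_mul_pow_card_inter hS]
    _ ≤ Real.exp (-(τ * x)) * Real.exp (p * (τ + τ ^ 2)) ^ #S := by
        have : 0 ≤ 1 - p + p * Real.exp τ :=
          add_nonneg (sub_nonneg.2 h1) (mul_nonneg h0 (Real.exp_pos τ).le)
        gcongr
        exact one_sub_add_mul_exp_le_exp h0 hτ
    _ = Real.exp (-(τ * x) + p * #S * (τ + τ ^ 2)) := by
        rw [← Real.exp_nat_mul, ← Real.exp_add]
        ring_nf

lemma binomialProb_upper_tail_le [DecidableEq α] (h0 : 0 ≤ p) (h1 : p ≤ 1) (hS : S ⊆ s) {ε : ℝ}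
    (hε0 : 0 ≤ ε) (hε2 : ε ≤ 2) :
    binomialProb s p (fun t ↦ (1 + ε) * (p * #S) ≤ #(t ∩ S)) ≤
      Real.exp (-(ε ^ 2 * (p * #S) / 4)) := by
  refine (binomialProb_le_exp_of_mul_le_mul_card_inter h0 h1 hS (τ := ε / 2)
    (x := (1 + ε) * (p * #S)) (abs_le.2 ⟨by linarith, by linarith⟩)
    fun t ht ↦ by gcongr).trans_eq ?_
  ring_nf

lemma binomialProb_lower_tail_le [DecidableEq α] (h0 : 0 ≤ p) (h1 : p ≤ 1) (hS : S ⊆ s) {ε : ℝ}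
    (hε0 : 0 ≤ ε) (hε2 : ε ≤ 2) :
    binomialProb s p (fun t ↦ #(t ∩ S) ≤ (1 - ε) * (p * #S)) ≤
      Real.exp (-(ε ^ 2 * (p * #S) / 4)) := by
  refine (binomialProb_le_exp_of_mul_le_mul_card_inter h0 h1 hS (τ := -(ε / 2))
    (x := (1 - ε) * (p * #S)) (abs_le.2 ⟨by linarith, by linarith⟩)
    fun t ht ↦ ?_).trans_eq ?_
  · nlinarith
  · ring_nf

end BinomialSubset

/-! ### Neighbourhoods and distances -/

section Neighbourhoods

open Finset

variable {V : Type*} [DecidableEq V]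

/-- The edges of the hypergraph with edge set `E` that meet the vertex set `A`. -/
def incidentEdges (E : Finset (Finset V)) (A : Finset V) : Finset (Finset V) :=
  {e ∈ E | (e ∩ A).Nonempty}

/-- The closed neighbourhood of the vertex set `A` in the hypergraph with edge set `E`; its
`r`-th iterate is the ball of radius `r` around `A`. -/
def closedNhd (E : Finset (Finset V)) (A : Finset V) : Finset V :=
  A ∪ (incidentEdges E A).biUnion id

variable {E : Finset (Finset V)} {A B : Finset V} {v : V}

lemma mem_closedNhd : v ∈ closedNhd E A ↔ v ∈ A ∨ ∃ e ∈ E, (e ∩ A).Nonempty ∧ v ∈ e := by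
  simp [closedNhd, incidentEdges, and_assoc]

lemma mem_closedNhd_iff_exists_singleton :
    v ∈ closedNhd E A ↔ ∃ a ∈ A, v ∈ closedNhd E {a} := by
  simp only [mem_closedNhd, mem_singleton, Finset.Nonempty, mem_inter]
  grind

lemma subset_closedNhd (E : Finset (Finset V)) (A : Finset V) : A ⊆ closedNhd E A :=
  subset_union_left

lemma subset_iterate_closedNhd (E : Finset (Finset V)) (r : ℕ) (A : Finset V) :
    A ⊆ (closedNhd E)^[r] A :=
  Function.id_le_iterate_of_id_le (subset_closedNhd E) r A

lemma closedNhd_mono (E : Finset (Finset V)) : Monotone (closedNhd E) := by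
  intro A B h v
  rw [mem_closedNhd_iff_exists_singleton, mem_closedNhd_iff_exists_singleton]
  exact fun ⟨a, ha, hv⟩ ↦ ⟨a, h ha, hv⟩

lemma incidentEdges_subset (E : Finset (Finset V)) (A : Finset V) : incidentEdges E A ⊆ E :=
  filter_subset _ _

lemma incidentEdges_eq_inter {Ω : Finset (Finset V)} (h : E ⊆ Ω) (A : Finset V) :
    incidentEdges E A = E ∩ incidentEdges Ω A := by
  rw [incidentEdges, incidentEdges, inter_filter, inter_eq_left.2 h]

end Neighbourhoods

namespace KGraph

open Finset

variable {n k : ℕ} {G : KGraph n k} {x y : Fin n} {r : ℕ}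

lemma isLoosePath_iff {l : List (Finset (Fin n))} :
    G.IsLoosePath x y l ↔ l ≠ [] ∧ (∀ e ∈ l, e ∈ G.edges) ∧ (∀ e ∈ l.head?, x ∈ e) ∧
      (∀ e ∈ l.getLast?, y ∈ e) ∧ l.IsChain fun e f ↦ (e ∩ f).Nonempty :=
  Iff.rfl

lemma isLoosePath_cons {e : Finset (Fin n)} {l : List (Finset (Fin n))} :
    G.IsLoosePath x y (e :: l) ↔
      e ∈ G.edges ∧ x ∈ e ∧ (l = [] ∧ y ∈ e ∨ ∃ z ∈ e, G.IsLoosePath z y l) := by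
  cases l with
  | nil => simp [isLoosePath_iff]
  | cons f l =>
    simp only [isLoosePath_iff, List.isChain_cons_cons, Finset.Nonempty, mem_inter]
    simp
    grind

lemma IsLoosePath.reverse {l : List (Finset (Fin n))} (h : G.IsLoosePath x y l) :
    G.IsLoosePath y x l.reverse := by
  obtain ⟨ne_nil, edges, head, last, chain⟩ := h
  refine ⟨by simpa, by simpa, by simpa, by simpa, ?_⟩
  exact List.isChain_reverse.2 (chain.imp fun e f h ↦ inter_comm e f ▸ h)

lemma dist_comm (G : KGraph n k) (x y : Fin n) : G.dist x y = G.dist y x := by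
  have le (x y : Fin n) : G.dist x y ≤ G.dist y x := by
    rcases eq_or_ne x y with rfl | hxy
    · exact le_rfl
    rw [dist, dist, if_neg hxy, if_neg hxy.symm]
    refine le_sInf ?_
    rintro _ ⟨l, hl, rfl⟩
    exact sInf_le ⟨l.reverse, hl.reverse, by simp⟩
  exact (le x y).antisymm (le y x)

lemma dist_le_natCast_iff :
    G.dist x y ≤ r ↔ x = y ∨ ∃ l, G.IsLoosePath x y l ∧ l.length ≤ r := by
  rcases eq_or_ne x y with rfl | hxy
  · simp [dist]
  rw [dist, if_neg hxy, ← ENat.lt_add_one_iff (ENat.natCast_ne_top r), sInf_lt_iff]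
  simp only [Set.exists_mem_image, Set.mem_ofPred_eq, hxy, false_or,
    ENat.lt_add_one_iff (ENat.natCast_ne_top r), Nat.cast_le]

lemma dist_le_succ_iff :
    G.dist x y ≤ (r + 1 : ℕ) ↔ ∃ z ∈ closedNhd G.edges {x}, G.dist z y ≤ r := by
  simp only [dist_le_natCast_iff, mem_closedNhd, mem_singleton]
  constructor
  · rintro (rfl | ⟨_ | ⟨e, l⟩, path, length_le⟩)
    · exact ⟨x, .inl rfl, .inl rfl⟩
    · exact absurd rfl path.1
    obtain ⟨he, hxe, ⟨-, hye⟩ | ⟨z, hze, path⟩⟩ := isLoosePath_cons.1 path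
    · exact ⟨y, .inr ⟨e, he, ⟨x, by simpa⟩, hye⟩, .inl rfl⟩
    · exact ⟨z, .inr ⟨e, he, ⟨x, by simpa⟩, hze⟩, .inr ⟨l, path, Nat.le_of_succ_le_succ length_le⟩⟩
  · rintro ⟨z, rfl | ⟨e, he, hxe, hze⟩, hzy⟩
    · exact hzy.imp_right fun ⟨l, path, length_le⟩ ↦ ⟨l, path, length_le.trans r.le_succ⟩
    replace hxe : x ∈ e := by simpa [Finset.Nonempty] using hxe
    rcases hzy with rfl | ⟨l, path, length_le⟩
    · exact .inr ⟨[e], isLoosePath_cons.2 ⟨he, hxe, .inl ⟨rfl, hze⟩⟩, by simp⟩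
    · exact .inr ⟨e :: l, isLoosePath_cons.2 ⟨he, hxe, .inr ⟨z, hze, path⟩⟩, by simpa⟩

lemma exists_dist_le_iff_mem_iterate {A : Finset (Fin n)} :
    (∃ x ∈ A, G.dist x y ≤ r) ↔ y ∈ (closedNhd G.edges)^[r] A := by
  induction r generalizing A with
  | zero =>
    simp only [dist_le_natCast_iff, Nat.le_zero, List.length_eq_zero_iff, isLoosePath_iff]
    simp
  | succ r ih =>
    simp only [Function.iterate_succ_apply, ← ih, dist_le_succ_iff,
      mem_closedNhd_iff_exists_singleton (A := A)]
    tauto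

lemma setDist_le_natCast_iff {A B : Set (Fin n)} :
    G.setDist A B ≤ r ↔ ∃ x ∈ A, ∃ y ∈ B, G.dist x y ≤ r := by
  simp only [setDist, ← ENat.lt_add_one_iff (ENat.natCast_ne_top r), iInf_lt_iff, exists_prop]

lemma vNhd_coe (G : KGraph n k) (A : Finset (Fin n)) (r : ℕ) :
    G.vNhd A r = ((closedNhd G.edges)^[r] A : Finset (Fin n)) := by
  ext v
  simp [vNhd, setDist_le_natCast_iff, ← exists_dist_le_iff_mem_iterate]

lemma eNhd_singleton (G : KGraph n k) (v : Fin n) (r : ℕ) :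
    G.eNhd {v} r = (incidentEdges G.edges ((closedNhd G.edges)^[r - 1] {v}) : Finset _) := by
  ext e
  simp only [eNhd, setDist_le_natCast_iff, incidentEdges, Finset.Nonempty, mem_inter,
    ← exists_dist_le_iff_mem_iterate]
  simp [G.dist_comm v]

lemma avgDeg_eq_sum_card (G : KGraph n k) :
    G.avgDeg = (∑ v, (#(closedNhd G.edges {v}) : ℝ)) / n := by
  have ncard (v : Fin n) : (G.vNhd {v} 1).ncard = #(closedNhd G.edges {v}) := by
    rw [← coe_singleton, vNhd_coe, Set.ncard_coe_finset, Function.iterate_one]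
  simp only [avgDeg, ncard]

lemma VB_coe (F : Finset (Finset (Fin n))) : VB (F : Set (Finset (Fin n))) = F.biUnion id := by
  simp [VB]

end KGraph

/-! ### Parameter range -/

/-- The parameters `n`, `k` and expected degree `D` lie in the range where the numerical estimates
below hold; this is the asymptotic hypothesis of the theorem with explicit constants. -/
structure Admissible (n k : ℕ) (D : ℝ) : Prop where
  log_ge : 100 ≤ Real.log n
  uniformity_ge : 10 * Real.log n ≤ k
  degree_ge : 16 * Real.log n ^ 3 ≤ D
  degree_mul_le : D * k ≤ n

namespace Admissible

open Finset Real

variable {n k r : ℕ} {D : ℝ}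

section

variable (h : Admissible n k D)

include h

lemma natCast_pos : (0 : ℝ) < n := by
  have : n ≠ 0 := by
    rintro rfl
    have := h.log_ge
    norm_num at this
  positivity

lemma exp_log_natCast : exp (log n) = n :=
  exp_log h.natCast_pos

lemma uniformity_ge_thousand : (1000 : ℝ) ≤ k := by
  linarith [h.log_ge, h.uniformity_ge]

lemma degree_ge_two_pow : 2 ^ 23 ≤ D :=
  calc (2 ^ 23 : ℝ) ≤ 16 * 100 ^ 3 := by norm_num
    _ ≤ 16 * log n ^ 3 := by gcongr; exact h.log_ge
    _ ≤ D := h.degree_ge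

lemma degree_mul_ge_log_pow : 160 * log n ^ 4 ≤ D * k :=
  calc 160 * log n ^ 4 = 16 * log n ^ 3 * (10 * log n) := by ring
    _ ≤ D * k := by
      have := h.log_ge
      gcongr
      exacts [(by norm_num : (0 : ℝ) ≤ 2 ^ 23).trans h.degree_ge_two_pow, h.degree_ge,
        h.uniformity_ge]

lemma degree_mul_ge_two_pow : 2 ^ 32 ≤ D * k :=
  calc (2 ^ 32 : ℝ) ≤ 2 ^ 23 * 1000 := by norm_num
    _ ≤ D * k := by
      gcongr
      exacts [(by norm_num : (0 : ℝ) ≤ 2 ^ 23).trans h.degree_ge_two_pow, h.degree_ge_two_pow,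
        h.uniformity_ge_thousand]

lemma log_le_degree_mul : log n ≤ D * k := by
  have : log n ≤ log n ^ 4 := le_self_pow₀ (by linarith [h.log_ge]) (by norm_num)
  linarith [h.degree_mul_ge_log_pow, h.log_ge]

lemma uniformity_le_natCast : (k : ℝ) ≤ n :=
  (le_mul_of_one_le_left k.cast_nonneg (by linarith [h.degree_ge_two_pow])).trans h.degree_mul_le

lemma sixteen_le_log_degree_mul : 16 ≤ log (D * k) := by
  rw [le_log_iff_exp_le (by linarith [h.degree_mul_ge_two_pow])]
  calc exp 16 = exp (2 * (8 : ℕ)) := by norm_num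
    _ ≤ 8 ^ 8 := exp_two_mul_le_eight_pow 8
    _ ≤ D * k := by linarith [h.degree_mul_ge_two_pow]

lemma four_mul_log_log_le : 4 * log (log n) ≤ log (D * k) := by
  have log_pos : 0 < log n := by linarith [h.log_ge]
  calc 4 * log (log n) = log (log n ^ 4) := by rw [log_pow]; norm_num
    _ ≤ log (D * k) := by
      gcongr
      linarith [h.degree_mul_ge_log_pow, pow_pos log_pos 4]

lemma two_pow_hundred_le_natCast : 2 ^ 100 ≤ (n : ℝ) := by
  rw [← h.exp_log_natCast]
  calc (2 : ℝ) ^ 100 ≤ exp 1 ^ 100 := by gcongr; exact exp_one_gt_two.le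
    _ = exp 100 := by rw [← exp_nat_mul]; norm_num
    _ ≤ exp (log n) := by gcongr; exact h.log_ge

lemma one_add_two_div_log_pow_le (hr : r ≤ log n) : (1 + 2 / log n) ^ r ≤ 8 := by
  have log_pos : 0 < log n := by linarith [h.log_ge]
  calc (1 + 2 / log n) ^ r ≤ exp (2 / log n) ^ r := by
        gcongr
        linarith [add_one_le_exp (2 / log n)]
    _ = exp (2 * (r / log n)) := by rw [← exp_nat_mul]; ring_nf
    _ ≤ exp (2 * (1 : ℕ)) := by
        gcongr
        simpa using div_le_one_of_le₀ hr log_pos.le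
    _ ≤ 8 := (exp_two_mul_le_eight_pow 1).trans_eq (pow_one 8)

lemma one_add_two_div_log_mul_pow_le (hr : r ≤ log n) :
    ((1 + 2 / log n) * (D * k)) ^ r ≤ 8 * (D * k) ^ r := by
  rw [mul_pow]
  have := h.degree_mul_ge_two_pow
  gcongr
  exact h.one_add_two_div_log_pow_le hr

end

end Admissible

/-- Bound for the proportion of `#A * (D * k)` that the closed neighbourhood of `A` may lack when
the ball in question is still `j + 1` steps, each of growth factor `D * k`, away from filling the
vertex set. -/
noncomputable def stepLoss (n k : ℕ) (D : ℝ) (j : ℕ) : ℝ :=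
  2 / Real.log n + 2 / (16 + j * Real.log (D * k))

open Finset Real in
lemma sum_range_two_div_add_mul_le {L : ℝ} (hL : 0 < L) (m : ℕ) :
    ∑ j ∈ range m, 2 / (16 + (j + 1 : ℕ) * L) ≤ 2 / L * (1 + log m) :=
  calc ∑ j ∈ range m, 2 / (16 + (j + 1 : ℕ) * L)
      ≤ ∑ j ∈ range m, 2 / L * ((j + 1 : ℕ) : ℝ)⁻¹ := by
        refine sum_le_sum fun j _ ↦ ?_
        rw [← div_eq_mul_inv, div_div, mul_comm L]
        gcongr
        linarith
    _ = 2 / L * (harmonic m : ℝ) := by simp [harmonic, mul_sum]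
    _ ≤ 2 / L * (1 + log m) := by gcongr; exact harmonic_le_one_add_log m

namespace Admissible

open Finset Real

variable {n k r : ℕ} {D : ℝ} (h : Admissible n k D)

include h

lemma stepLoss_nonneg (j : ℕ) : 0 ≤ stepLoss n k D j := by
  have := h.log_ge
  have := h.sixteen_le_log_degree_mul
  unfold stepLoss
  positivity

lemma stepLoss_le_one (j : ℕ) : stepLoss n k D j ≤ 1 := by
  have log_part : 2 / log n ≤ 1 / 2 := by
    rw [div_le_div_iff₀] <;> linarith [h.log_ge]
  have growth_part : 2 / (16 + j * log (D * k)) ≤ 2 / 16 := by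
    have := h.sixteen_le_log_degree_mul
    gcongr
    exact le_add_of_nonneg_right (by positivity)
  unfold stepLoss
  linarith

lemma two_div_log_mul_one_add_log_le (hr : r ≤ log n) :
    2 / log (D * k) * (1 + log r) ≤ 5 / 8 := by
  have log_r_le : log r ≤ log (log n) := by
    rcases r.eq_zero_or_pos with rfl | hr0
    · simpa using log_nonneg (by linarith [h.log_ge])
    · gcongr
  have := h.sixteen_le_log_degree_mul
  rw [div_mul_eq_mul_div, div_le_iff₀ (by linarith)]
  linarith [h.four_mul_log_log_le]

lemma sum_stepLoss_le (hr : r * log (D * k) ≤ log n) :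
    ∑ j ∈ range r, stepLoss n k D j ≤ 7 / 8 := by
  have L_ge := h.sixteen_le_log_degree_mul
  have log_pos : 0 < log n := by linarith [h.log_ge]
  have log_part : r * (2 / log n) ≤ 1 / 8 := by
    rw [mul_div_assoc', div_le_iff₀ log_pos]
    nlinarith [r.cast_nonneg (α := ℝ)]
  have growth_part : ∑ j ∈ range r, 2 / (16 + j * log (D * k)) ≤ 2 / 16 + 5 / 8 := by
    cases r with
    | zero => norm_num
    | succ m =>
      rw [sum_range_succ', add_comm]
      gcongr
      · simp
      refine (sum_range_two_div_add_mul_le (by linarith) m).trans ?_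
      exact h.two_div_log_mul_one_add_log_le (by push_cast at hr; nlinarith)
  simp only [stepLoss, sum_add_distrib, sum_const, card_range, nsmul_eq_mul]
  linarith

end Admissible

/-! ### Quasirandom hypergraphs -/

namespace KGraph

open Finset Real

/-- The pseudorandom properties of a typical binomial random `k`-graph with expected vertex degree
`D` on which the expansion rests: no vertex has degree much larger than `D`, a set of vertices that
is not too large meets almost as many edges as it would if these edges were disjoint, and a set of
edges that is not too large overlaps little. The last property is in the form in which the union
bound yields it; the natural number subtraction is harmless because a set `F` of edges covers at
most `k * #F` vertices. -/
structure IsQuasirandom {n k : ℕ} (G : KGraph n k) (D : ℝ) : Prop where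
  card_incidentEdges_singleton_le : ∀ v,
    (#(incidentEdges G.edges {v}) : ℝ) ≤ (1 + 1 / log n) * D
  le_card_incidentEdges : ∀ A : Finset (Fin n), A.Nonempty → #A * (D * k) ≤ n →
    (1 - 2 / log n) * (#A * D) ≤ #(incidentEdges G.edges A)
  exp_neg_le_cover_ratio_pow : ∀ F ⊆ G.edges, F.Nonempty → k * #F ≤ n →
    exp (-(2 * (k * #F : ℕ))) ≤ ((#(F.biUnion id) : ℝ) / n) ^ (k * #F - #(F.biUnion id))

variable {n k r : ℕ} {D d lam : ℝ} {G : KGraph n k} {A : Finset (Fin n)}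
  {F : Finset (Finset (Fin n))}

lemma card_biUnion_edges_le (hF : F ⊆ G.edges) : #(F.biUnion id) ≤ k * #F := by
  rw [mul_comm]
  exact card_biUnion_le_card_mul _ _ _ fun e he ↦ (G.uniform e (hF he)).le

namespace IsQuasirandom

section Cover

variable (hG : G.IsQuasirandom D)

include hG

lemma le_card_biUnion_of_mul_exp_le (hlam : 0 < lam) (hF : F ⊆ G.edges) (hne : F.Nonempty)
    (hsmall : k * #F * exp lam ≤ n) : (1 - 2 / lam) * (k * #F) ≤ #(F.biUnion id) := by
  have cover_le := card_biUnion_edges_le hF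
  have total_le : (k * #F : ℝ) ≤ n :=
    (le_mul_of_one_le_right (by positivity) (one_le_exp hlam.le)).trans hsmall
  rcases (k * #F).eq_zero_or_pos with total_zero | total_pos
  · have : (k * #F : ℝ) = 0 := mod_cast total_zero
    simp [this]
  have n_pos : (0 : ℝ) < n := lt_of_lt_of_le (mod_cast total_pos) total_le
  have ratio_le : (#(F.biUnion id) : ℝ) / n ≤ exp (-lam) := by
    rw [exp_neg, div_le_iff₀ n_pos, inv_mul_eq_div, le_div_iff₀ (exp_pos lam)]
    refine le_trans ?_ hsmall
    gcongr
    exact_mod_cast cover_le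
  have exponent_le := (hG.exp_neg_le_cover_ratio_pow F hF hne (mod_cast total_le)).trans
    (pow_le_pow_left₀ (by positivity) ratio_le _)
  rw [← exp_nat_mul, exp_le_exp, Nat.cast_sub cover_le] at exponent_le
  push_cast at exponent_le
  rw [one_sub_mul, sub_le_comm, div_mul_eq_mul_div, le_div_iff₀ hlam]
  linarith

lemma min_le_card_biUnion (h : Admissible n k D) (hF : F ⊆ G.edges) :
    1 / 256 * min (k * #F : ℝ) n ≤ #(F.biUnion id) := by
  rcases F.eq_empty_or_nonempty with rfl | hne
  · simp
  have k_pos : (0 : ℝ) < k := by linarith [h.uniformity_ge_thousand]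
  have one_le : 1 ≤ (n : ℝ) / (64 * k) := by
    rw [one_le_div (by positivity)]
    nlinarith [h.degree_ge_two_pow, h.degree_mul_le]
  obtain ⟨F', hF'F, hne', card_le, le_card⟩ := exists_subset_nonempty_card_le_min_le hne one_le
  have exp_four_le : exp 4 ≤ 64 := by
    have := exp_two_mul_le_eight_pow 2
    norm_num at this
    exact this
  have small : k * #F' * exp 4 ≤ n :=
    calc k * #F' * exp 4 ≤ k * (n / (64 * k)) * 64 := by gcongr
      _ = n := by field_simp
  have cover := hG.le_card_biUnion_of_mul_exp_le four_pos (hF'F.trans hF) hne' small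
  have mono : (#(F'.biUnion id) : ℝ) ≤ #(F.biUnion id) :=
    mod_cast card_le_card (biUnion_subset_biUnion_of_subset_left _ hF'F)
  calc 1 / 256 * min (k * #F : ℝ) n ≤ 1 / 2 * min (k * #F : ℝ) (n / 128) := by
        have := mul_min_le_min_mul_right (a := k * #F) (b := n) (c := 1 / 128)
          (by positivity) (by norm_num) (by norm_num)
        rw [div_eq_mul_one_div (n : ℝ), mul_comm (n : ℝ)]
        linarith
    _ = 1 / 2 * (k * min (#F : ℝ) (n / (64 * k) / 2)) := by
        rw [mul_min_of_nonneg _ _ k_pos.le]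
        congr! 2
        field_simp
        ring
    _ ≤ 1 / 2 * (k * #F') := by gcongr
    _ = (1 - 2 / 4) * (k * #F') := by norm_num
    _ ≤ #(F.biUnion id) := cover.trans mono

end Cover

section Upper

variable (hG : G.IsQuasirandom D)

include hG

lemma card_incidentEdges_le (A : Finset (Fin n)) :
    (#(incidentEdges G.edges A) : ℝ) ≤ (1 + 1 / log n) * D * #A := by
  have cover : incidentEdges G.edges A ⊆ A.biUnion fun v ↦ incidentEdges G.edges {v} := by
    intro e he
    simp only [incidentEdges, mem_biUnion, mem_filter, Finset.Nonempty, mem_inter,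
      mem_singleton] at he ⊢
    grind
  calc (#(incidentEdges G.edges A) : ℝ) ≤ ∑ v ∈ A, (#(incidentEdges G.edges {v}) : ℝ) :=
        mod_cast (card_le_card cover).trans card_biUnion_le
    _ ≤ #A • ((1 + 1 / log n) * D) :=
        sum_le_card_nsmul _ _ _ fun v _ ↦ hG.card_incidentEdges_singleton_le v
    _ = (1 + 1 / log n) * D * #A := by rw [nsmul_eq_mul, mul_comm]

lemma card_closedNhd_le (h : Admissible n k D) (A : Finset (Fin n)) :
    (#(closedNhd G.edges A) : ℝ) ≤ (1 + 2 / log n) * (D * k) * #A := by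
  have log_pos : 0 < log n := by linarith [h.log_ge]
  have one_le : 1 ≤ 1 / log n * (D * k) := by
    rw [one_div_mul_eq_div, one_le_div log_pos]
    exact h.log_le_degree_mul
  have covered : #((incidentEdges G.edges A).biUnion id) ≤ k * #(incidentEdges G.edges A) :=
    card_biUnion_edges_le (incidentEdges_subset _ _)
  calc (#(closedNhd G.edges A) : ℝ) ≤ #A + k * #(incidentEdges G.edges A) :=
        mod_cast (card_union_le _ _).trans (by gcongr)
    _ ≤ 1 / log n * (D * k) * #A + k * ((1 + 1 / log n) * D * #A) := by
        gcongr
        · exact le_mul_of_one_le_left (by positivity) one_le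
        · exact hG.card_incidentEdges_le A
    _ = (1 + 2 / log n) * (D * k) * #A := by ring

lemma card_iterate_closedNhd_le (h : Admissible n k D) (A : Finset (Fin n)) (r : ℕ) :
    (#((closedNhd G.edges)^[r] A) : ℝ) ≤ ((1 + 2 / log n) * (D * k)) ^ r * #A := by
  have factor_nonneg : 0 ≤ (1 + 2 / log n) * (D * k) := by
    have := h.log_ge
    have := h.degree_mul_ge_two_pow
    positivity
  induction r with
  | zero => simp
  | succ r ih =>
    rw [Function.iterate_succ_apply', pow_succ', mul_assoc]
    exact (hG.card_closedNhd_le h _).trans (mul_le_mul_of_nonneg_left ih factor_nonneg)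

end Upper

section Lower

variable (hG : G.IsQuasirandom D) (h : Admissible n k D)

include hG h

lemma le_card_closedNhd_of_mul_exp_le (hlam : 2 ≤ lam) (hA : A.Nonempty)
    (hsmall : 2 * (#A * (D * k)) * exp lam ≤ n) :
    (1 - 2 / log n - 2 / lam) * (#A * (D * k)) ≤ #(closedNhd G.edges A) := by
  have log_ge := h.log_ge
  have D_ge := h.degree_ge_two_pow
  have two_div_log_le : 2 / log n ≤ 1 / 2 := by rw [div_le_div_iff₀] <;> linarith
  have lam_factor_nonneg : 0 ≤ 1 - 2 / lam :=
    sub_nonneg.2 ((div_le_one (by linarith)).2 hlam)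
  have volume_le : #A * (D * k) ≤ n := by
    refine le_trans ?_ hsmall
    nlinarith [one_le_exp (by linarith : 0 ≤ lam), (by positivity : 0 ≤ #A * (D * k))]
  have edges_ge := hG.le_card_incidentEdges A hA volume_le
  have edges_nonempty : (incidentEdges G.edges A).Nonempty := by
    have : (0 : ℝ) < #A := mod_cast hA.card_pos
    rw [← card_pos, ← Nat.cast_pos (α := ℝ)]
    refine lt_of_lt_of_le (mul_pos ?_ (by positivity)) edges_ge
    linarith
  have edges_small : k * #(incidentEdges G.edges A) * exp lam ≤ n :=
    calc k * #(incidentEdges G.edges A) * exp lam ≤ k * ((1 + 1 / log n) * D * #A) * exp lam := by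
          gcongr
          exact hG.card_incidentEdges_le A
      _ ≤ k * (2 * D * #A) * exp lam := by
          gcongr
          linarith [div_le_one_of_le₀ (by linarith : 1 ≤ log n) (by linarith)]
      _ = 2 * (#A * (D * k)) * exp lam := by ring
      _ ≤ n := hsmall
  calc (1 - 2 / log n - 2 / lam) * (#A * (D * k))
      ≤ (1 - 2 / lam) * (1 - 2 / log n) * (#A * (D * k)) := by
        gcongr
        have : 0 ≤ 2 / lam * (2 / log n) := by positivity
        linarith
    _ = (1 - 2 / lam) * (k * ((1 - 2 / log n) * (#A * D))) := by ring
    _ ≤ (1 - 2 / lam) * (k * #(incidentEdges G.edges A)) := by gcongr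
    _ ≤ #((incidentEdges G.edges A).biUnion id) :=
        hG.le_card_biUnion_of_mul_exp_le (by linarith) (incidentEdges_subset _ _)
          edges_nonempty edges_small
    _ ≤ #(closedNhd G.edges A) := mod_cast card_le_card subset_union_right

lemma le_card_closedNhd_of_le (hA : A.Nonempty) (hsmall : #A * (D * k) ≤ n) :
    1 / 512 * (#A * (D * k)) ≤ #(closedNhd G.edges A) := by
  have D_ge := h.degree_ge_two_pow
  have two_div_log_le : 2 / log n ≤ 1 / 2 := by rw [div_le_div_iff₀] <;> linarith [h.log_ge]
  have edges_ge : 1 / 2 * (#A * (D * k)) ≤ k * #(incidentEdges G.edges A) :=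
    calc 1 / 2 * (#A * (D * k)) ≤ (1 - 2 / log n) * (#A * (D * k)) := by gcongr; linarith
      _ = k * ((1 - 2 / log n) * (#A * D)) := by ring
      _ ≤ k * #(incidentEdges G.edges A) := by
          gcongr
          exact hG.le_card_incidentEdges A hA hsmall
  calc 1 / 512 * (#A * (D * k)) = 1 / 256 * (1 / 2 * (#A * (D * k))) := by ring
    _ ≤ 1 / 256 * min (k * #(incidentEdges G.edges A) : ℝ) n := by
        gcongr
        exact le_min edges_ge (by linarith [(by positivity : 0 ≤ #A * (D * k))])
    _ ≤ #((incidentEdges G.edges A).biUnion id) :=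
        hG.min_le_card_biUnion h (incidentEdges_subset _ _)
    _ ≤ #(closedNhd G.edges A) := mod_cast card_le_card subset_union_right

lemma min_le_card_closedNhd (hA : A.Nonempty) :
    1 / 1024 * min (#A * (D * k)) n ≤ #(closedNhd G.edges A) := by
  have volume_pos : 0 < D * k := by linarith [h.degree_mul_ge_two_pow]
  obtain ⟨A', hA'A, hA', card_le, le_card⟩ := exists_subset_nonempty_card_le_min_le hA
    ((one_le_div volume_pos).2 h.degree_mul_le)
  rw [le_div_iff₀ volume_pos] at card_le
  calc 1 / 1024 * min (#A * (D * k)) n = 1 / 512 * (1 / 2 * min (#A * (D * k)) n) := by ring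
    _ ≤ 1 / 512 * min (#A * (D * k)) (n / 2) := by
        have := mul_min_le_min_mul_right (a := #A * (D * k)) (b := n) (c := 1 / 2)
          (by positivity) (by norm_num) (by norm_num)
        rw [div_eq_mul_one_div (n : ℝ), mul_comm (n : ℝ)]
        gcongr
    _ = 1 / 512 * (min (#A : ℝ) (n / (D * k) / 2) * (D * k)) := by
        rw [min_mul_of_nonneg _ _ volume_pos.le, div_right_comm, div_mul_cancel₀ _ volume_pos.ne']
    _ ≤ 1 / 512 * (#A' * (D * k)) := by gcongr
    _ ≤ #(closedNhd G.edges A') := hG.le_card_closedNhd_of_le h hA' card_le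
    _ ≤ #(closedNhd G.edges A) := mod_cast card_le_card (closedNhd_mono _ hA'A)

end Lower

end IsQuasirandom

end KGraph

/-! ### Growth of balls -/

namespace Admissible

open Real

variable {n k r : ℕ} {D : ℝ}

lemma natCast_mul_log_le (h : Admissible n k D) (hr : (D * k) ^ r ≤ n) :
    r * log (D * k) ≤ log n :=
  natCast_mul_log_le_log_of_pow_le (by linarith [h.degree_mul_ge_two_pow]) hr

lemma natCast_le_log (h : Admissible n k D) (hr : (D * k) ^ r ≤ n) : r ≤ log n :=
  (le_mul_of_one_le_right r.cast_nonneg (by linarith [h.sixteen_le_log_degree_mul])).trans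
    (h.natCast_mul_log_le hr)

lemma pow_le_natCast_of_mul_le (h : Admissible n k D) {a i : ℕ} (ha : 0 < a) (hir : i ≤ r)
    (hsmall : 2 ^ 28 * (a * (D * k) ^ r) ≤ n) : (D * k) ^ i ≤ n := by
  have volume_ge := h.degree_mul_ge_two_pow
  have pow_pos : 0 < (D * k) ^ r := by positivity
  have one_le : (1 : ℝ) ≤ a := mod_cast ha
  calc (D * k) ^ i ≤ (D * k) ^ r := pow_le_pow_right₀ (by linarith) hir
    _ ≤ n := by nlinarith

end Admissible

namespace KGraph.IsQuasirandom

open Finset Real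

variable {n k r : ℕ} {D d : ℝ} {G : KGraph n k} {A : Finset (Fin n)}

section Growth

variable (hG : G.IsQuasirandom D) (h : Admissible n k D)

include hG h

lemma le_card_closedNhd_iterate_step (hA : A.Nonempty) {i j : ℕ}
    (hsmall : 2 ^ 28 * (#A * (D * k) ^ (i + 1 + j)) ≤ n) :
    (1 - stepLoss n k D j) * (#((closedNhd G.edges)^[i] A) * (D * k)) ≤
      #((closedNhd G.edges)^[i + 1] A) := by
  have volume_ge := h.degree_mul_ge_two_pow
  have volume_pos : 0 < D * k := by linarith
  have log_ge := h.sixteen_le_log_degree_mul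
  have pow_le : (D * k) ^ i ≤ n :=
    h.pow_le_natCast_of_mul_le hA.card_pos (by lia) hsmall
  have ball_le : (#((closedNhd G.edges)^[i] A) : ℝ) ≤ 8 * (D * k) ^ i * #A :=
    (hG.card_iterate_closedNhd_le h A i).trans (by
      gcongr
      exact h.one_add_two_div_log_mul_pow_le (h.natCast_le_log pow_le))
  have exp_eq : exp (16 + j * log (D * k)) ≤ 2 ^ 24 * (D * k) ^ j := by
    rw [exp_add, exp_nat_mul, exp_log volume_pos]
    gcongr
    have := exp_two_mul_le_eight_pow 8
    norm_num at this ⊢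
    exact this
  rw [Function.iterate_succ_apply', stepLoss, ← sub_sub]
  refine hG.le_card_closedNhd_of_mul_exp_le h ?_ (hA.mono (subset_iterate_closedNhd _ i A)) ?_
  · exact le_add_of_le_of_nonneg (by norm_num) (by positivity)
  calc 2 * (#((closedNhd G.edges)^[i] A) * (D * k)) * exp (16 + j * log (D * k))
      ≤ 2 * (8 * (D * k) ^ i * #A * (D * k)) * (2 ^ 24 * (D * k) ^ j) := by gcongr
    _ = 2 ^ 28 * (#A * (D * k) ^ (i + 1 + j)) := by ring
    _ ≤ n := hsmall

lemma one_sub_sum_stepLoss_mul_le_card_iterate (hA : A.Nonempty) {i : ℕ} (hir : i ≤ r)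
    (hsmall : 2 ^ 28 * (#A * (D * k) ^ r) ≤ n) :
    (1 - ∑ j ∈ range i, stepLoss n k D (r - 1 - j)) * (#A * (D * k) ^ i) ≤
      #((closedNhd G.edges)^[i] A) := by
  induction i with
  | zero => simp
  | succ i ih =>
    have step := hG.le_card_closedNhd_iterate_step h hA (i := i) (j := r - 1 - i) (by
      rwa [show i + 1 + (r - 1 - i) = r by lia])
    set loss := ∑ j ∈ range i, stepLoss n k D (r - 1 - j)
    have loss_nonneg : 0 ≤ loss := sum_nonneg fun j _ ↦ h.stepLoss_nonneg _
    have volume_ge := h.degree_mul_ge_two_pow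
    have step_nonneg := h.stepLoss_nonneg (r - 1 - i)
    have step_le_one := h.stepLoss_le_one (r - 1 - i)
    rw [sum_range_succ]
    calc (1 - (loss + stepLoss n k D (r - 1 - i))) * (#A * (D * k) ^ (i + 1))
        ≤ (1 - stepLoss n k D (r - 1 - i)) * (1 - loss) * (#A * (D * k) ^ (i + 1)) := by
          gcongr
          linarith [mul_nonneg step_nonneg loss_nonneg]
      _ = (1 - stepLoss n k D (r - 1 - i)) * ((1 - loss) * (#A * (D * k) ^ i) * (D * k)) := by
          ring
      _ ≤ (1 - stepLoss n k D (r - 1 - i)) * (#((closedNhd G.edges)^[i] A) * (D * k)) := by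
          gcongr
          exact ih (by lia)
      _ ≤ #((closedNhd G.edges)^[i + 1] A) := step

lemma eighth_mul_le_card_iterate (hA : A.Nonempty)
    (hsmall : 2 ^ 28 * (#A * (D * k) ^ r) ≤ n) :
    1 / 8 * (#A * (D * k) ^ r) ≤ #((closedNhd G.edges)^[r] A) := by
  have volume_ge := h.degree_mul_ge_two_pow
  have pow_le : (D * k) ^ r ≤ n := h.pow_le_natCast_of_mul_le hA.card_pos le_rfl hsmall
  have loss_le := h.sum_stepLoss_le (h.natCast_mul_log_le pow_le)
  rw [← sum_range_reflect] at loss_le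
  refine le_trans ?_ (hG.one_sub_sum_stepLoss_mul_le_card_iterate h hA le_rfl hsmall)
  gcongr
  linarith

lemma div_two_pow_le_card_iterate_of_lt (hA : A.Nonempty)
    (hlarge : n < 2 ^ 28 * (#A * (D * k) ^ r)) :
    n / 2 ^ 41 ≤ (#((closedNhd G.edges)^[r] A) : ℝ) := by
  have volume_ge := h.degree_mul_ge_two_pow
  induction r with
  | zero =>
    simp only [pow_zero, mul_one, Function.iterate_zero, id] at hlarge ⊢
    linarith
  | succ r ih =>
    rcases lt_or_ge (n : ℝ) (2 ^ 28 * (#A * (D * k) ^ r)) with hlt | hge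
    · refine (ih hlt).trans ?_
      rw [Function.iterate_succ_apply']
      exact_mod_cast card_le_card (subset_closedNhd _ _)
    have ball_ge := hG.eighth_mul_le_card_iterate h hA hge
    rw [Function.iterate_succ_apply']
    refine le_trans ?_
      (hG.min_le_card_closedNhd h (hA.mono (subset_iterate_closedNhd G.edges r A)))
    calc (n : ℝ) / 2 ^ 41 = 1 / 1024 * (n / 2 ^ 31) := by ring
      _ ≤ 1 / 1024 * min (#((closedNhd G.edges)^[r] A) * (D * k)) n := by
        gcongr
        refine le_min ?_ (div_le_self n.cast_nonneg (by norm_num))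
        calc (n : ℝ) / 2 ^ 31 ≤ 1 / 8 * (#A * (D * k) ^ r) * (D * k) := by
              rw [pow_succ (D * k)] at hlarge
              linarith
          _ ≤ #((closedNhd G.edges)^[r] A) * (D * k) := by gcongr

lemma mul_min_le_card_iterate (hd0 : 0 ≤ d) (hd : d ≤ (1 + 2 / log n) * (D * k)) :
    1 / 2 ^ 41 * min (#A * d ^ r) n ≤ (#((closedNhd G.edges)^[r] A) : ℝ) := by
  rcases A.eq_empty_or_nonempty with rfl | hA
  · simp
  rcases le_or_gt (2 ^ 28 * (#A * (D * k) ^ r)) (n : ℝ) with hsmall | hlarge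
  · have pow_le : (D * k) ^ r ≤ n := h.pow_le_natCast_of_mul_le hA.card_pos le_rfl hsmall
    have volume_ge := h.degree_mul_ge_two_pow
    calc 1 / 2 ^ 41 * min (#A * d ^ r) (n : ℝ) ≤ 1 / 2 ^ 41 * (#A * (8 * (D * k) ^ r)) := by
          gcongr
          refine (min_le_left _ _).trans ?_
          gcongr
          exact (pow_le_pow_left₀ hd0 hd r).trans
            (h.one_add_two_div_log_mul_pow_le (h.natCast_le_log pow_le))
      _ ≤ 1 / 8 * (#A * (D * k) ^ r) := by
          linarith [(by positivity : 0 ≤ #A * (D * k) ^ r)]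
      _ ≤ _ := hG.eighth_mul_le_card_iterate h hA hsmall
  · calc 1 / 2 ^ 41 * min (#A * d ^ r) (n : ℝ) ≤ 1 / 2 ^ 41 * (n : ℝ) := by
          gcongr
          exact min_le_right _ _
      _ = (n : ℝ) / 2 ^ 41 := by ring
      _ ≤ _ := hG.div_two_pow_le_card_iterate_of_lt h hA hlarge

end Growth

end KGraph.IsQuasirandom

/-! ### Average degree and expansion -/

namespace KGraph

open Finset Real

variable {n k r : ℕ} {D c : ℝ} {G : KGraph n k} {A : Finset (Fin n)}
  {F : Finset (Finset (Fin n))}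

section AverageDegree

lemma le_avgDeg (hn : 0 < n) (hc : ∀ v, c ≤ #(closedNhd G.edges {v})) : c ≤ G.avgDeg := by
  rw [avgDeg_eq_sum_card, le_div_iff₀ (by positivity)]
  simpa [mul_comm] using card_nsmul_le_sum univ _ c fun v _ ↦ hc v

lemma avgDeg_le (hn : 0 < n) (hc : ∀ v, #(closedNhd G.edges {v}) ≤ c) : G.avgDeg ≤ c := by
  rw [avgDeg_eq_sum_card, div_le_iff₀ (by positivity)]
  simpa [mul_comm] using sum_le_card_nsmul univ _ c fun v _ ↦ hc v

end AverageDegree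

namespace IsQuasirandom

variable (hG : G.IsQuasirandom D) (h : Admissible n k D)

include hG h

section AverageDegree

lemma avgDeg_le : G.avgDeg ≤ (1 + 2 / log n) * (D * k) :=
  KGraph.avgDeg_le (mod_cast h.natCast_pos) fun v ↦ by simpa using hG.card_closedNhd_le h {v}

lemma div_le_avgDeg : D * k / 512 ≤ G.avgDeg :=
  le_avgDeg (mod_cast h.natCast_pos) fun v ↦ by
    simpa [div_eq_inv_mul] using
      hG.le_card_closedNhd_of_le h (singleton_nonempty v) (by simpa using h.degree_mul_le)

lemma uniformity_le_avgDeg : k ≤ G.avgDeg := by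
  nlinarith [hG.div_le_avgDeg h, h.degree_ge_two_pow, k.cast_nonneg (α := ℝ)]

lemma two_pow_le_avgDeg : 2 ^ 23 ≤ G.avgDeg := by
  linarith [hG.div_le_avgDeg h, h.degree_mul_ge_two_pow]

lemma one_sub_mul_le_avgDeg_of_sq_le (hsq : (D * k) ^ 2 ≤ n) :
    (1 - 8 / log n) * (D * k) ≤ G.avgDeg := by
  have log_ge := h.log_ge
  have volume_ge := h.degree_mul_ge_two_pow
  have volume_le : D * k ≤ exp (log n / 2) := by
    refine le_of_sq_le_sq ?_ (exp_pos _).le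
    rwa [← exp_nat_mul, Nat.cast_ofNat, mul_div_cancel₀ _ two_ne_zero, h.exp_log_natCast]
  have two_le : 2 ≤ exp (log n / 6) := by linarith [add_one_le_exp (log n / 6)]
  have small : 2 * (D * k) * exp (log n / 3) ≤ n :=
    calc 2 * (D * k) * exp (log n / 3)
        ≤ exp (log n / 6) * exp (log n / 2) * exp (log n / 3) := by gcongr
      _ = exp (log n) := by
          rw [← exp_add, ← exp_add]
          ring_nf
      _ = n := h.exp_log_natCast
  refine le_avgDeg (mod_cast h.natCast_pos) fun v ↦ ?_
  have := hG.le_card_closedNhd_of_mul_exp_le h (lam := log n / 3) (by linarith)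
    (singleton_nonempty v) (by simpa using small)
  rw [card_singleton, Nat.cast_one, one_mul] at this
  refine le_trans (le_of_eq ?_) this
  field_simp
  ring

end AverageDegree

section AverageDegreePow

lemma one_add_mul_le_exp_mul_avgDeg (hsq : (D * k) ^ 2 ≤ n) :
    (1 + 2 / log n) * (D * k) ≤ exp (18 / log n) * G.avgDeg := by
  have log_ge := h.log_ge
  have volume_ge := h.degree_mul_ge_two_pow
  have inv_le : (log n)⁻¹ ≤ 1 / 100 := by
    rw [one_div]
    gcongr
  have inv_pos : 0 < (log n)⁻¹ := by positivity
  calc (1 + 2 / log n) * (D * k) ≤ (18 / log n + 1) * (1 - 8 / log n) * (D * k) := by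
        gcongr
        simp only [div_eq_mul_inv]
        nlinarith
    _ ≤ exp (18 / log n) * (1 - 8 / log n) * (D * k) := by
        gcongr
        · simp only [div_eq_mul_inv]
          linarith
        · exact add_one_le_exp _
    _ = exp (18 / log n) * ((1 - 8 / log n) * (D * k)) := mul_assoc _ _ _
    _ ≤ exp (18 / log n) * G.avgDeg := by
        gcongr
        exact hG.one_sub_mul_le_avgDeg_of_sq_le h hsq

lemma one_add_mul_pow_le_of_sq_le (hsq : (D * k) ^ 2 ≤ n) (hr : G.avgDeg ^ r ≤ n) :
    ((1 + 2 / log n) * (D * k)) ^ r ≤ 2 ^ 27 * G.avgDeg ^ r := by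
  have log_ge := h.log_ge
  have volume_ge := h.degree_mul_ge_two_pow
  have avgDeg_ge := hG.two_pow_le_avgDeg h
  have r_le : r ≤ log n := by
    refine le_trans ?_ (natCast_mul_log_le_log_of_pow_le (by linarith) hr)
    refine le_mul_of_one_le_right r.cast_nonneg ?_
    rw [le_log_iff_exp_le (by linarith)]
    linarith [exp_one_lt_three]
  calc ((1 + 2 / log n) * (D * k)) ^ r ≤ (exp (18 / log n) * G.avgDeg) ^ r :=
        pow_le_pow_left₀ (by positivity) (hG.one_add_mul_le_exp_mul_avgDeg h hsq) r
    _ = exp (2 * (9 : ℕ) * (r / log n)) * G.avgDeg ^ r := by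
        rw [mul_pow, ← exp_nat_mul]
        ring_nf
    _ ≤ exp (2 * (9 : ℕ)) * G.avgDeg ^ r := by
        gcongr ?_ * _
        rw [exp_le_exp]
        exact mul_le_of_le_one_right (by positivity) (div_le_one_of_le₀ r_le (by linarith))
    _ ≤ 2 ^ 27 * G.avgDeg ^ r := by
        gcongr
        exact (exp_two_mul_le_eight_pow 9).trans (by norm_num)

lemma le_two_of_lt_sq (hsq : n < (D * k) ^ 2) (hr : G.avgDeg ^ r ≤ n) : r ≤ 2 := by
  by_contra! three_le
  have volume_ge := h.degree_mul_ge_two_pow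
  have cube_le : (D * k / 512) ^ 3 ≤ (D * k) ^ 2 :=
    calc (D * k / 512) ^ 3 ≤ G.avgDeg ^ 3 := by
          gcongr
          exact hG.div_le_avgDeg h
      _ ≤ G.avgDeg ^ r := pow_le_pow_right₀ (by linarith [hG.two_pow_le_avgDeg h]) three_le
      _ ≤ (D * k) ^ 2 := hr.trans hsq.le
  have volume_le : D * k ≤ 2 ^ 27 := by
    refine le_of_mul_le_mul_left ?_ (by positivity : 0 < (D * k) ^ 2)
    linarith
  linarith

lemma one_add_mul_pow_le_of_lt_sq (hsq : n < (D * k) ^ 2) (hr : G.avgDeg ^ r ≤ n) :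
    ((1 + 2 / log n) * (D * k)) ^ r ≤ 2 ^ 27 * G.avgDeg ^ r := by
  have log_ge := h.log_ge
  have volume_ge := h.degree_mul_ge_two_pow
  have avgDeg_ge := hG.two_pow_le_avgDeg h
  calc ((1 + 2 / log n) * (D * k)) ^ r ≤ (2 ^ 10 * G.avgDeg) ^ r := by
        refine pow_le_pow_left₀ (by positivity) ?_ r
        have : 2 / log n ≤ 1 := div_le_one_of_le₀ (by linarith) (by linarith)
        nlinarith [hG.div_le_avgDeg h]
    _ = (2 ^ 10) ^ r * G.avgDeg ^ r := mul_pow _ _ _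
    _ ≤ (2 ^ 10) ^ 2 * G.avgDeg ^ r := by
        gcongr
        exacts [by norm_num, hG.le_two_of_lt_sq h hsq hr]
    _ ≤ 2 ^ 27 * G.avgDeg ^ r := by
        gcongr
        norm_num

lemma one_add_mul_pow_le (hr : G.avgDeg ^ r ≤ n) :
    ((1 + 2 / log n) * (D * k)) ^ r ≤ 2 ^ 27 * G.avgDeg ^ r :=
  (le_or_gt ((D * k) ^ 2) (n : ℝ)).elim (hG.one_add_mul_pow_le_of_sq_le h · hr)
    (hG.one_add_mul_pow_le_of_lt_sq h · hr)

end AverageDegreePow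

section Expanding

lemma ncard_eNhd_singleton_le (v : Fin n) (hr : 1 ≤ r) (hd : G.avgDeg ^ r ≤ √(n * k)) :
    ((G.eNhd {v} r).ncard : ℝ) ≤ 2 ^ 27 * G.avgDeg ^ r / k := by
  have log_ge := h.log_ge
  have k_pos : (0 : ℝ) < k := by linarith [h.uniformity_ge_thousand]
  have D_ge := h.degree_ge_two_pow
  have pow_le : G.avgDeg ^ r ≤ n := by
    refine hd.trans ((sqrt_le_left n.cast_nonneg).2 ?_)
    rw [sq]
    gcongr
    exact_mod_cast h.uniformity_le_natCast
  obtain ⟨m, rfl⟩ := Nat.exists_eq_add_of_le' hr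
  rw [eNhd_singleton, Set.ncard_coe_finset, le_div_iff₀ k_pos, Nat.add_sub_cancel]
  calc (#(incidentEdges G.edges ((closedNhd G.edges)^[m] {v})) : ℝ) * k
      ≤ (1 + 1 / log n) * D * #((closedNhd G.edges)^[m] {v}) * k := by
        gcongr
        exact hG.card_incidentEdges_le _
    _ = #((closedNhd G.edges)^[m] {v}) * ((1 + 1 / log n) * (D * k)) := by ring
    _ ≤ ((1 + 2 / log n) * (D * k)) ^ m * ((1 + 2 / log n) * (D * k)) := by
        gcongr
        · simpa using hG.card_iterate_closedNhd_le h {v} m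
        · norm_num
    _ = ((1 + 2 / log n) * (D * k)) ^ (m + 1) := (pow_succ _ m).symm
    _ ≤ 2 ^ 27 * G.avgDeg ^ (m + 1) := hG.one_add_mul_pow_le h pow_le

lemma ncard_vNhd_le (A : Finset (Fin n)) (r : ℕ) :
    ((G.vNhd A r).ncard : ℝ) ≤ 2 ^ 27 * #A * G.avgDeg ^ r := by
  rw [vNhd_coe, Set.ncard_coe_finset]
  rcases le_or_gt (G.avgDeg ^ r) (n : ℝ) with hr | hr
  · calc (#((closedNhd G.edges)^[r] A) : ℝ) ≤ ((1 + 2 / log n) * (D * k)) ^ r * #A :=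
          hG.card_iterate_closedNhd_le h A r
      _ ≤ 2 ^ 27 * G.avgDeg ^ r * #A := by
          gcongr
          exact hG.one_add_mul_pow_le h hr
      _ = 2 ^ 27 * #A * G.avgDeg ^ r := by ring
  rcases A.eq_empty_or_nonempty with rfl | hA
  · simpa using hG.card_iterate_closedNhd_le h ∅ r
  have one_le : (1 : ℝ) ≤ #A := mod_cast hA.card_pos
  calc (#((closedNhd G.edges)^[r] A) : ℝ) ≤ n := mod_cast card_finset_fin_le _
    _ ≤ G.avgDeg ^ r := hr.le
    _ ≤ 2 ^ 27 * #A * G.avgDeg ^ r :=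
      le_mul_of_one_le_left (n.cast_nonneg.trans hr.le) (by linarith)

lemma mul_min_le_ncard_vNhd (A : Finset (Fin n)) (r : ℕ) :
    1 / 2 ^ 41 * min (#A * G.avgDeg ^ r) n ≤ ((G.vNhd A r).ncard : ℝ) := by
  rw [vNhd_coe, Set.ncard_coe_finset]
  exact hG.mul_min_le_card_iterate h (by linarith [hG.two_pow_le_avgDeg h]) (hG.avgDeg_le h)

lemma mul_min_le_ncard_vNhdE (hF : F ⊆ G.edges) (r : ℕ) :
    1 / 2 ^ 49 * min (#F * k * G.avgDeg ^ r) n ≤ ((G.vNhdE F r).ncard : ℝ) := by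
  have one_le_pow : 1 ≤ G.avgDeg ^ r := one_le_pow₀ (by linarith [hG.two_pow_le_avgDeg h])
  have cover := hG.min_le_card_biUnion h hF
  rw [vNhdE, VB_coe]
  refine le_trans ?_ (hG.mul_min_le_ncard_vNhd h _ r)
  calc 1 / 2 ^ 49 * min (#F * k * G.avgDeg ^ r) (n : ℝ)
      = 1 / 2 ^ 41 * (1 / 256 * min (#F * k * G.avgDeg ^ r) n) := by ring
    _ ≤ 1 / 2 ^ 41 * min (#(F.biUnion id) * G.avgDeg ^ r) n := by
        gcongr
        refine le_min ?_ ?_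
        · calc 1 / 256 * min (#F * k * G.avgDeg ^ r) (n : ℝ)
              ≤ 1 / 256 * min (#F * k * G.avgDeg ^ r) (n * G.avgDeg ^ r) := by
                gcongr
                exact le_mul_of_one_le_right n.cast_nonneg one_le_pow
            _ = 1 / 256 * min (k * #F : ℝ) n * G.avgDeg ^ r := by
                rw [mul_assoc _ (min _ _), min_mul_of_nonneg _ _ (by linarith), mul_comm (k : ℝ)]
            _ ≤ #(F.biUnion id) * G.avgDeg ^ r := by gcongr
        · linarith [min_le_right (#F * k * G.avgDeg ^ r) (n : ℝ), n.cast_nonneg (α := ℝ)]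

theorem isExpanding : G.IsExpanding (1 / 2 ^ 49) := by
  have weaken : (2 : ℝ) ^ 27 ≤ (1 / 2 ^ 49)⁻¹ := by norm_num
  have avgDeg_ge := hG.two_pow_le_avgDeg h
  refine ⟨hG.uniformity_le_avgDeg h, fun v r hr hd ↦ ?_, fun A r _ ↦ ?_, fun B hB r _ ↦ ?_⟩
  · refine (hG.ncard_eNhd_singleton_le h v hr hd).trans ?_
    gcongr
  · lift A to Finset (Fin n) using A.toFinite
    rw [Set.ncard_coe_finset]
    constructor
    · refine le_trans ?_ (hG.mul_min_le_ncard_vNhd h A r)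
      gcongr <;> norm_num
    · refine (hG.ncard_vNhd_le h A r).trans ?_
      gcongr
  · lift B to Finset (Finset (Fin n)) using B.toFinite
    rw [Set.ncard_coe_finset]
    exact hG.mul_min_le_ncard_vNhdE h (mod_cast hB) r

end Expanding

end IsQuasirandom

end KGraph

/-! ### Counting edges and unions of edges -/

section Counting

open Finset

variable {V : Type*} [DecidableEq V]

lemma card_incidentEdges_singleton_le_add {E : Finset (Finset V)} {A : Finset V} {v : V} {c : ℕ}
    (hv : v ∈ A) (hc : ∀ u ∈ A, u ≠ v → #{e ∈ E | {v, u} ⊆ e} ≤ c) :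
    #(incidentEdges E {v}) ≤ #{e ∈ E | e ∩ A = {v}} + #A * c := by
  have cover : incidentEdges E {v} ⊆
      {e ∈ E | e ∩ A = {v}} ∪ (A.erase v).biUnion fun u ↦ {e ∈ E | {v, u} ⊆ e} := by
    intro e he
    obtain ⟨he, hve⟩ : e ∈ E ∧ v ∈ e := by simpa [incidentEdges, Finset.Nonempty] using he
    by_cases other : ∃ u ∈ e ∩ A, u ≠ v
    · obtain ⟨u, hu, huv⟩ := other
      rw [mem_inter] at hu
      refine mem_union_right _ (mem_biUnion.2 ⟨u, mem_erase.2 ⟨huv, hu.2⟩, ?_⟩)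
      simp [he, insert_subset_iff, hve, hu.1]
    · push Not at other
      refine mem_union_left _ (mem_filter.2 ⟨he, ?_⟩)
      exact eq_singleton_iff_unique_mem.2 ⟨mem_inter.2 ⟨hve, hv⟩, other⟩
  calc #(incidentEdges E {v}) ≤ #{e ∈ E | e ∩ A = {v}} + #(A.erase v) * c := by
        refine (card_le_card cover).trans ((card_union_le _ _).trans ?_)
        gcongr
        exact card_biUnion_le_card_mul _ _ _ fun u hu ↦
          hc u (mem_of_mem_erase hu) (ne_of_mem_erase hu)
    _ ≤ #{e ∈ E | e ∩ A = {v}} + #A * c := by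
        gcongr
        exact erase_subset v A

lemma sum_card_inter_eq_singleton_le (E : Finset (Finset V)) (A : Finset V) :
    ∑ v ∈ A, #{e ∈ E | e ∩ A = {v}} ≤ #(incidentEdges E A) := by
  rw [← card_biUnion]
  · refine card_le_card (biUnion_subset.2 fun v _ ↦ monotone_filter_right E fun e _ he ↦ ?_)
    exact he ▸ singleton_nonempty v
  · refine fun u _ v _ huv ↦ disjoint_filter.2 fun e _ hu hv ↦ huv ?_
    exact singleton_injective (hu.symm.trans hv)

lemma card_incidentEdges_powersetCard_singleton [Fintype V] {k : ℕ} (hk : 1 ≤ k) (v : V) :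
    #(incidentEdges (powersetCard k univ) {v}) = (Fintype.card V - 1).choose (k - 1) := by
  have := card_filter_powersetCard_subset {v} univ k (subset_univ _) (by simpa)
  simpa [incidentEdges, Finset.Nonempty] using this

lemma card_filter_pair_subset_powersetCard [Fintype V] {k : ℕ} (hk : 2 ≤ k) {u v : V}
    (huv : u ≠ v) :
    #{e ∈ powersetCard k univ | {u, v} ⊆ e} = (Fintype.card V - 2).choose (k - 2) := by
  have := card_filter_powersetCard_subset {u, v} univ k (subset_univ _) (by rwa [card_pair huv])
  rwa [card_pair huv] at this

lemma card_mul_sub_le_card_incidentEdges_powersetCard [Fintype V] {k : ℕ} (hk : 2 ≤ k)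
    (A : Finset V) :
    (#A : ℝ) * ((Fintype.card V - 1).choose (k - 1) -
        #A * ((Fintype.card V - 2).choose (k - 2) : ℕ)) ≤
      #(incidentEdges (powersetCard k univ) A) := by
  rw [← nsmul_eq_mul]
  refine (card_nsmul_le_sum A (fun v ↦ (#{e ∈ powersetCard k univ | e ∩ A = {v}} : ℝ)) _
    fun v hv ↦ ?_).trans (mod_cast sum_card_inter_eq_singleton_le _ A)
  have := card_incidentEdges_singleton_le_add hv fun u _ huv ↦
    (card_filter_pair_subset_powersetCard hk huv.symm).le
  rw [card_incidentEdges_powersetCard_singleton (by lia)] at this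
  rw [sub_le_iff_le_add]
  exact_mod_cast this

lemma mul_choose_sub_two_le {n k : ℕ} (hk : 2 ≤ k) (hkn : k ≤ n) :
    n * (n - 2).choose (k - 2) ≤ k * (n - 1).choose (k - 1) := by
  obtain ⟨j, rfl⟩ := Nat.exists_eq_add_of_le' hk
  obtain ⟨m, rfl⟩ := Nat.exists_eq_add_of_le' (hk.trans hkn)
  have absorb := Nat.add_one_mul_choose_eq m j
  have pascal := Nat.choose_succ_succ' m j
  simp only [Nat.add_sub_cancel, show j + 2 - 1 = j + 1 by lia, show m + 2 - 1 = m + 1 by lia]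
  linarith

end Counting

open Finset Real in
lemma sum_pow_card_nonempty_le {V : Type*} [Fintype V] {x : ℝ} (hx : 0 ≤ x)
    (hVx : Fintype.card V * x ≤ 1) :
    ∑ A : Finset V with A.Nonempty, x ^ #A ≤ 2 * (Fintype.card V * x) := by
  classical
  have total : ∑ A : Finset V, x ^ #A = (x + 1) ^ Fintype.card V := by
    simpa using Fintype.sum_pow_mul_eq_add_pow V x 1
  have nonempty_eq : ∑ A : Finset V with A.Nonempty, x ^ #A = (x + 1) ^ Fintype.card V - 1 := by
    have := sum_filter_add_sum_filter_not univ (fun A : Finset V ↦ A.Nonempty) fun A ↦ x ^ #A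
    simp only [not_nonempty_iff_eq_empty, filter_eq', mem_univ, if_true, sum_singleton,
      card_empty, pow_zero, total] at this
    linarith
  have y_nonneg : 0 ≤ Fintype.card V * x := by positivity
  have taylor := (abs_le.1 (abs_exp_sub_one_sub_id_le
    (abs_le.2 ⟨by linarith, hVx⟩ : |(Fintype.card V * x : ℝ)| ≤ 1))).2
  rw [nonempty_eq]
  calc (x + 1) ^ Fintype.card V - 1 ≤ exp x ^ Fintype.card V - 1 := by
        gcongr
        exact add_one_le_exp x
    _ = exp (Fintype.card V * x) - 1 := by rw [exp_nat_mul]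
    _ ≤ 2 * (Fintype.card V * x) := by nlinarith

open Finset Real in
lemma binomialProb_exists_subset_powersetCard_le {V : Type*} [Fintype V] {p : ℝ} (h0 : 0 ≤ p)
    (h1 : p ≤ 1) (k s b : ℕ) :
    binomialProb (powersetCard k (univ : Finset V)) p (fun E ↦ ∃ U ∈ powersetCard s univ,
      ∃ F ∈ powersetCard b (powersetCard k U), F ⊆ E) ≤
      (Fintype.card V).choose s * ((s.choose k).choose b * p ^ b) := by
  refine (binomialProb_exists_le_card_mul h0 h1 fun U hU ↦ ?_).trans_eq
    (by rw [card_powersetCard, card_univ])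
  rw [← (mem_powersetCard.1 hU).2, ← card_powersetCard, ← card_powersetCard]
  refine binomialProb_exists_le_card_mul h0 h1 fun F hF ↦ ?_
  rw [mem_powersetCard] at hF
  rw [binomialProb_superset (hF.1.trans (powersetCard_mono (subset_univ U))), hF.2]

open Real in
lemma choose_mul_choose_choose_mul_pow_le {n k s b : ℕ} {p : ℝ} (h0 : 0 ≤ p) (hsn : s ≤ n)
    (hs : s ≤ k * b) :
    n.choose s * ((s.choose k).choose b * p ^ b) ≤
      exp s * ((s : ℝ) / n) ^ (k * b - s) * (p * n.choose k) ^ b := by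
  have cancel : (n : ℝ) / s * (s / n) ≤ 1 := by
    rw [div_mul_div_comm, mul_comm]
    exact div_self_le_one _
  calc n.choose s * ((s.choose k).choose b * p ^ b)
      ≤ exp s * ((n : ℝ) / s) ^ s * ((((s : ℝ) / n) ^ k * n.choose k) ^ b * p ^ b) := by
        gcongr
        · exact choose_le_exp_mul_div_pow n s
        · refine (show ((s.choose k).choose b : ℝ) ≤ (s.choose k : ℝ) ^ b from
            mod_cast Nat.choose_le_pow _ _).trans ?_
          gcongr
          exact choose_le_div_pow_mul_choose hsn k
    _ = exp s * ((n : ℝ) / s) ^ s * ((s : ℝ) / n) ^ (s + (k * b - s)) *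
          (p * n.choose k) ^ b := by
        rw [Nat.add_sub_cancel' hs, pow_mul]
        ring
    _ = ((n : ℝ) / s * (s / n)) ^ s *
          (exp s * ((s : ℝ) / n) ^ (k * b - s) * (p * n.choose k) ^ b) := by
        rw [pow_add, mul_pow]
        ring
    _ ≤ exp s * ((s : ℝ) / n) ^ (k * b - s) * (p * n.choose k) ^ b :=
        mul_le_of_le_one_left (by positivity) (pow_le_one₀ (by positivity) cancel)

/-- The expected number of edges of `G^k(n,p)` that contain a given vertex. -/
noncomputable def expectedDegree (n k : ℕ) (p : ℝ) : ℝ :=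
  p * ((n - 1).choose (k - 1) : ℕ)

section RandomHypergraph

open Finset Real

variable {n k : ℕ} {p : ℝ}

lemma ghProb_eq_binomialProb (n k : ℕ) (p : ℝ) (Q : KGraph n k → Prop) :
    ghProb n k p Q = binomialProb (powersetCard k (univ : Finset (Fin n))) p
      fun E ↦ ∃ h : ∀ e ∈ E, #e = k, Q ⟨E, h⟩ := by
  classical
  rw [ghProb, binomialProb, sum_filter]
  refine sum_congr rfl fun E _ ↦ ?_
  by_cases h : ∀ e ∈ E, #e = k
  · simp only [dif_pos h, exists_prop_of_true h, binomialWeight]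
  · simp only [dif_neg h, exists_prop_of_false h, if_false]

lemma ghProb_mono (h0 : 0 ≤ p) (h1 : p ≤ 1) {Q R : KGraph n k → Prop} (h : ∀ G, Q G → R G) :
    ghProb n k p Q ≤ ghProb n k p R := by
  rw [ghProb_eq_binomialProb, ghProb_eq_binomialProb]
  exact binomialProb_mono h0 h1 fun _ _ ⟨hE, hQ⟩ ↦ ⟨hE, h _ hQ⟩

lemma ghProb_le_one (h0 : 0 ≤ p) (h1 : p ≤ 1) (Q : KGraph n k → Prop) : ghProb n k p Q ≤ 1 := by
  rw [ghProb_eq_binomialProb]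
  exact binomialProb_le_one h0 h1

namespace Admissible

section Parameters

variable (h : Admissible n k (expectedDegree n k p))

include h

lemma two_le_uniformity : 2 ≤ k :=
  Nat.cast_le.1 <| (by norm_num : ((2 : ℕ) : ℝ) ≤ 1000).trans h.uniformity_ge_thousand

lemma uniformity_le : k ≤ n := mod_cast h.uniformity_le_natCast

lemma prob_nonneg : 0 ≤ p := by
  by_contra! neg
  have : expectedDegree n k p ≤ 0 := mul_nonpos_of_nonpos_of_nonneg neg.le (Nat.cast_nonneg _)
  linarith [h.degree_ge_two_pow]

lemma prob_le_one : p ≤ 1 := by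
  have two_le := h.two_le_uniformity
  have k_le := h.uniformity_le
  have n_le : n ≤ k * (n - 1).choose (k - 1) := by
    have := succ_le_succ_mul_choose (show 0 < k - 1 by lia) (show k - 1 ≤ n - 1 by lia)
    rwa [Nat.sub_add_cancel (by lia), Nat.sub_add_cancel (by lia)] at this
  have n_le' : (n : ℝ) ≤ k * (n - 1).choose (k - 1) := mod_cast n_le
  have mul_le : p * (k * (n - 1).choose (k - 1)) ≤ 1 * (k * (n - 1).choose (k - 1)) := by
    linarith [(by unfold expectedDegree; ring :
      p * (k * ((n - 1).choose (k - 1) : ℝ)) = expectedDegree n k p * k), h.degree_mul_le]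
  exact le_of_mul_le_mul_right mul_le (h.natCast_pos.trans_le n_le')

lemma prob_mul_choose_le : p * n.choose k ≤ (n : ℝ) ^ 2 := by
  have k_ge := h.uniformity_ge_thousand
  have k_le := h.uniformity_le
  have absorb : (k : ℝ) * n.choose k = n * (n - 1).choose (k - 1) := by
    have := Nat.add_one_mul_choose_eq (n - 1) (k - 1)
    have two_le := h.two_le_uniformity
    rw [Nat.sub_add_cancel (by lia), Nat.sub_add_cancel (by lia), mul_comm (n.choose k)] at this
    exact_mod_cast this.symm
  have p_nonneg := h.prob_nonneg
  calc p * n.choose k ≤ p * (k * n.choose k) := by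
        gcongr
        exact le_mul_of_one_le_left (Nat.cast_nonneg _) (by linarith)
    _ = n * expectedDegree n k p := by
        rw [absorb, expectedDegree]
        ring
    _ ≤ n * n := by
        gcongr
        nlinarith [h.degree_mul_le, h.degree_ge_two_pow]
    _ = (n : ℝ) ^ 2 := (sq _).symm

lemma prob_mul_codegree_le :
    n * (p * ((n - 2).choose (k - 2) : ℕ)) ≤ k * expectedDegree n k p := by
  have : (n * (n - 2).choose (k - 2) : ℝ) ≤ k * (n - 1).choose (k - 1) :=
    mod_cast mul_choose_sub_two_le h.two_le_uniformity h.uniformity_le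
  calc n * (p * ((n - 2).choose (k - 2) : ℕ)) = p * (n * (n - 2).choose (k - 2)) := by ring
    _ ≤ p * (k * (n - 1).choose (k - 1)) := mul_le_mul_of_nonneg_left this h.prob_nonneg
    _ = k * expectedDegree n k p := by
        rw [expectedDegree]
        ring

lemma exp_neg_log_natCast : exp (-log n) = 1 / n := by
  rw [exp_neg, h.exp_log_natCast, one_div]

end Parameters

end Admissible

end RandomHypergraph

/-! ### Quasirandomness of the binomial random hypergraph -/

section Typicality

open Finset Real

variable {n k : ℕ} {p : ℝ} (h : Admissible n k (expectedDegree n k p))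

include h

namespace Admissible

lemma four_mul_log_le : 4 * log n ≤ (1 / log n) ^ 2 * expectedDegree n k p / 4 := by
  have log_ge := h.log_ge
  rw [div_pow, one_pow, one_div_mul_eq_div, div_div, le_div_iff₀ (by positivity)]
  linarith [h.degree_ge]

lemma one_sub_mul_le_prob_mul_card_incidentEdges {A : Finset (Fin n)}
    (hsmall : #A * (expectedDegree n k p * k) ≤ n) :
    (1 - 1 / log n) * (#A * expectedDegree n k p) ≤
      p * #(incidentEdges (powersetCard k univ) A) := by
  have log_ge := h.log_ge
  have n_pos := h.natCast_pos
  have p_nonneg := h.prob_nonneg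
  have overlap_le : #A * (p * ((n - 2).choose (k - 2) : ℕ)) ≤ 1 := by
    refine le_of_mul_le_mul_left ?_ n_pos
    calc n * (#A * (p * ((n - 2).choose (k - 2) : ℕ)))
        = #A * (n * (p * ((n - 2).choose (k - 2) : ℕ))) := by ring
      _ ≤ #A * (k * expectedDegree n k p) :=
          mul_le_mul_of_nonneg_left h.prob_mul_codegree_le (Nat.cast_nonneg _)
      _ ≤ n * 1 := by linarith
  have one_le : 1 ≤ 1 / log n * expectedDegree n k p := by
    rw [one_div_mul_eq_div, one_le_div (by linarith)]
    nlinarith [h.degree_ge, sq_nonneg (log n), pow_le_pow_left₀ (by norm_num) log_ge 2]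
  have counting := card_mul_sub_le_card_incidentEdges_powersetCard h.two_le_uniformity A
  rw [Fintype.card_fin] at counting
  calc (1 - 1 / log n) * (#A * expectedDegree n k p)
      = #A * (expectedDegree n k p - 1 / log n * expectedDegree n k p) := by ring
    _ ≤ #A * (expectedDegree n k p - #A * (p * ((n - 2).choose (k - 2) : ℕ))) :=
        mul_le_mul_of_nonneg_left (by linarith) (Nat.cast_nonneg _)
    _ = p * (#A * (((n - 1).choose (k - 1) : ℕ) - #A * ((n - 2).choose (k - 2) : ℕ))) := by
        rw [expectedDegree]
        ring
    _ ≤ p * #(incidentEdges (powersetCard k univ) A) := by gcongr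

end Admissible

lemma binomialProb_lt_card_incidentEdges_singleton_le :
    binomialProb (powersetCard k (univ : Finset (Fin n))) p
      (fun E ↦ ∃ v, (1 + 1 / log n) * expectedDegree n k p < #(incidentEdges E {v})) ≤ 1 / n := by
  have log_ge := h.log_ge
  have inv_le : 1 / log n ≤ 1 := div_le_one_of_le₀ (by linarith) (by linarith)
  have n_pos := h.natCast_pos
  have vertex (v : Fin n) : binomialProb (powersetCard k (univ : Finset (Fin n))) p
      (fun E ↦ (1 + 1 / log n) * expectedDegree n k p < #(incidentEdges E {v})) ≤
      exp (-(2 * log n)) := by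
    have mean : p * #(incidentEdges (powersetCard k (univ : Finset (Fin n))) {v}) =
        expectedDegree n k p := by
      rw [card_incidentEdges_powersetCard_singleton (by linarith [h.two_le_uniformity]),
        Fintype.card_fin, expectedDegree]
    have tail := binomialProb_upper_tail_le h.prob_nonneg h.prob_le_one
      (incidentEdges_subset (powersetCard k (univ : Finset (Fin n))) {v})
      (ε := 1 / log n) (by positivity) (by linarith)
    rw [mean] at tail
    refine (binomialProb_mono h.prob_nonneg h.prob_le_one fun E hE lt ↦ ?_).trans (tail.trans ?_)
    · rw [incidentEdges_eq_inter hE] at lt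
      exact lt.le
    · gcongr
      linarith [h.four_mul_log_le]
  have union := binomialProb_exists_le_card_mul h.prob_nonneg h.prob_le_one
    (I := (univ : Finset (Fin n))) fun v _ ↦ vertex v
  calc _ ≤ n * exp (-(2 * log n)) := by simpa using union
    _ = 1 / n := by
      rw [two_mul, neg_add, exp_add, h.exp_neg_log_natCast]
      field_simp

lemma binomialProb_card_incidentEdges_lt_le_pow {A : Finset (Fin n)}
    (hsmall : #A * (expectedDegree n k p * k) ≤ n) :
    binomialProb (powersetCard k (univ : Finset (Fin n))) p
      (fun E ↦ #(incidentEdges E A) < (1 - 2 / log n) * (#A * expectedDegree n k p)) ≤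
      exp (-(2 * log n)) ^ #A := by
  have log_ge := h.log_ge
  have inv_le : 1 / log n ≤ 1 / 2 := by rw [div_le_div_iff₀] <;> linarith
  have inv_pos : 0 < 1 / log n := by positivity
  have degree_pos : 0 < expectedDegree n k p := by linarith [h.degree_ge_two_pow]
  have mean := h.one_sub_mul_le_prob_mul_card_incidentEdges hsmall
  have tail := binomialProb_lower_tail_le h.prob_nonneg h.prob_le_one
    (incidentEdges_subset (powersetCard k (univ : Finset (Fin n))) A)
    (ε := 1 / log n) inv_pos.le (by linarith)
  refine (binomialProb_mono h.prob_nonneg h.prob_le_one fun E hE lt ↦ ?_).trans (tail.trans ?_)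
  · rw [← incidentEdges_eq_inter hE]
    calc (#(incidentEdges E A) : ℝ) ≤ (1 - 2 / log n) * (#A * expectedDegree n k p) := lt.le
      _ ≤ (1 - 1 / log n) * ((1 - 1 / log n) * (#A * expectedDegree n k p)) := by
          rw [← mul_assoc (1 - 1 / log n)]
          refine mul_le_mul_of_nonneg_right ?_ (mul_nonneg (Nat.cast_nonneg _) degree_pos.le)
          linarith [sq_nonneg (1 / log n), (by ring : 2 / log n = 2 * (1 / log n))]
      _ ≤ (1 - 1 / log n) * (p * #(incidentEdges (powersetCard k univ) A)) :=
          mul_le_mul_of_nonneg_left mean (by linarith)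
  · rw [← exp_nat_mul, exp_le_exp, mul_neg, neg_le_neg_iff]
    calc #A * (2 * log n) ≤ #A * ((1 / log n) ^ 2 * expectedDegree n k p / 4 / 2) :=
          mul_le_mul_of_nonneg_left (by linarith [h.four_mul_log_le]) (Nat.cast_nonneg _)
      _ = (1 / log n) ^ 2 * (1 / 2 * (#A * expectedDegree n k p)) / 4 := by ring
      _ ≤ (1 / log n) ^ 2 * (p * #(incidentEdges (powersetCard k univ) A)) / 4 := by
          have : 1 / 2 * (#A * expectedDegree n k p) ≤
              (1 - 1 / log n) * (#A * expectedDegree n k p) := by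
            gcongr
            linarith
          exact div_le_div_of_nonneg_right
            (mul_le_mul_of_nonneg_left (this.trans mean) (sq_nonneg _)) (by norm_num)

lemma binomialProb_exists_card_incidentEdges_lt_le :
    binomialProb (powersetCard k (univ : Finset (Fin n))) p
      (fun E ↦ ∃ A : Finset (Fin n), A.Nonempty ∧ #A * (expectedDegree n k p * k) ≤ n ∧
        #(incidentEdges E A) < (1 - 2 / log n) * (#A * expectedDegree n k p)) ≤ 2 / n := by
  classical
  have n_pos := h.natCast_pos
  have mul_exp : n * exp (-(2 * log n)) = 1 / n := by
    rw [two_mul, neg_add, exp_add, h.exp_neg_log_natCast]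
    field_simp
  have one_div_le : (1 : ℝ) / n ≤ 1 := by
    rw [div_le_one n_pos]
    linarith [h.two_pow_hundred_le_natCast]
  calc _ ≤ binomialProb (powersetCard k (univ : Finset (Fin n))) p (fun E ↦
          ∃ A ∈ ({A | A.Nonempty ∧ #A * (expectedDegree n k p * k) ≤ n} : Finset (Finset (Fin n))),
            #(incidentEdges E A) < (1 - 2 / log n) * (#A * expectedDegree n k p)) :=
        binomialProb_mono h.prob_nonneg h.prob_le_one fun E _ ⟨A, hA, hsmall, lt⟩ ↦
          ⟨A, by simp [hA, hsmall], lt⟩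
    _ ≤ ∑ A : Finset (Fin n) with A.Nonempty ∧ #A * (expectedDegree n k p * k) ≤ n,
          exp (-(2 * log n)) ^ #A := by
        refine (binomialProb_exists_le_sum h.prob_nonneg h.prob_le_one _ _).trans
          (sum_le_sum fun A hA ↦ binomialProb_card_incidentEdges_lt_le_pow h ?_)
        exact (mem_filter.1 hA).2.2
    _ ≤ ∑ A : Finset (Fin n) with A.Nonempty, exp (-(2 * log n)) ^ #A := by
        gcongr with A
        exact And.left
    _ ≤ 2 * (1 / n) := by
        rw [← mul_exp]
        have := sum_pow_card_nonempty_le (V := Fin n) (exp_pos (-(2 * log n))).le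
        rw [Fintype.card_fin, mul_exp] at this
        rw [mul_exp]
        exact this one_div_le
    _ = 2 / n := by ring

lemma binomialProb_exists_cover_size_le {b s : ℕ} (hb : 1 ≤ b) (hsn : s ≤ n) (hs : s ≤ k * b)
    (hratio : ((s : ℝ) / n) ^ (k * b - s) < exp (-(2 * (k * b : ℕ)))) :
    binomialProb (powersetCard k (univ : Finset (Fin n))) p
      (fun E ↦ ∃ U ∈ powersetCard s univ, ∃ F ∈ powersetCard b (powersetCard k U), F ⊆ E) ≤
      exp (-(4 * log n)) := by
  have log_ge := h.log_ge
  have b_ge : (1 : ℝ) ≤ b := mod_cast hb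
  have k_ge := h.uniformity_ge
  have mean_nonneg : 0 ≤ p * n.choose k := mul_nonneg h.prob_nonneg (Nat.cast_nonneg _)
  calc _ ≤ exp s * ((s : ℝ) / n) ^ (k * b - s) * (p * n.choose k) ^ b := by
        refine (binomialProb_exists_subset_powersetCard_le h.prob_nonneg h.prob_le_one
          k s b).trans ?_
        rw [Fintype.card_fin]
        exact choose_mul_choose_choose_mul_pow_le h.prob_nonneg hsn hs
    _ ≤ exp (k * b : ℕ) * exp (-(2 * (k * b : ℕ))) * (exp (log n) ^ 2) ^ b := by
        rw [h.exp_log_natCast]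
        gcongr
        exact h.prob_mul_choose_le
    _ = exp (2 * b * log n - k * b) := by
        rw [← pow_mul, ← exp_nat_mul, ← exp_add, ← exp_add]
        push_cast
        ring_nf
    _ ≤ exp (-(4 * log n)) := by
        gcongr
        nlinarith

lemma binomialProb_exists_cover_ratio_pow_lt_le :
    binomialProb (powersetCard k (univ : Finset (Fin n))) p
      (fun E ↦ ∃ F ⊆ E, F.Nonempty ∧ k * #F ≤ n ∧
        ((#(F.biUnion id) : ℝ) / n) ^ (k * #F - #(F.biUnion id)) <
          exp (-(2 * (k * #F : ℕ)))) ≤ 1 / n := by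
  have n_ge := h.two_pow_hundred_le_natCast
  have two_le := h.two_le_uniformity
  let sizes : Finset (ℕ × ℕ) := {x ∈ Icc 1 n ×ˢ range (n + 1) | x.2 ≤ k * x.1 ∧
    ((x.2 : ℝ) / n) ^ (k * x.1 - x.2) < exp (-(2 * (k * x.1 : ℕ)))}
  have card_sizes : (#sizes : ℝ) ≤ n * (n + 1) := by
    have : #sizes ≤ n * (n + 1) := (card_filter_le _ _).trans_eq (by simp)
    exact_mod_cast this
  calc _ ≤ binomialProb (powersetCard k (univ : Finset (Fin n))) p (fun E ↦ ∃ x ∈ sizes,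
          ∃ U ∈ powersetCard x.2 univ, ∃ F ∈ powersetCard x.1 (powersetCard k U), F ⊆ E) := by
        refine binomialProb_mono h.prob_nonneg h.prob_le_one ?_
        rintro E hE ⟨F, hFE, hF, small, lt⟩
        have card_eq (e) (he : e ∈ F) : #e = k := (mem_powersetCard.1 (hE (hFE he))).2
        refine ⟨(#F, #(F.biUnion id)), ?_, F.biUnion id, by simp, F, ?_, hFE⟩
        · have cover_le : #(F.biUnion id) ≤ k * #F :=
            (card_biUnion_le_card_mul _ _ _ fun e he ↦ (card_eq e he).le).trans_eq (mul_comm _ _)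
          have := hF.card_pos
          simp only [sizes, mem_filter, mem_product, mem_Icc, mem_range]
          exact ⟨⟨⟨this, by nlinarith⟩, by lia⟩, cover_le, lt⟩
        · exact mem_powersetCard.2 ⟨fun e he ↦
            mem_powersetCard.2 ⟨subset_biUnion_of_mem id he, card_eq e he⟩, rfl⟩
    _ ≤ #sizes * exp (-(4 * log n)) := by
        refine binomialProb_exists_le_card_mul h.prob_nonneg h.prob_le_one fun x hx ↦ ?_
        simp only [sizes, mem_filter, mem_product, mem_Icc, mem_range] at hx
        exact binomialProb_exists_cover_size_le h hx.1.1.1 (by lia) hx.2.1 hx.2.2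
    _ ≤ n * (n + 1) * (1 / n) ^ 4 := by
        rw [← h.exp_neg_log_natCast, ← exp_nat_mul]
        push_cast
        rw [mul_neg]
        gcongr
    _ ≤ n * (n * n) * (1 / n) ^ 4 := by
        gcongr
        nlinarith
    _ = 1 / n := by
        have := h.natCast_pos
        field_simp

lemma binomialProb_not_isQuasirandom_le :
    binomialProb (powersetCard k (univ : Finset (Fin n))) p
      (fun E ↦ ¬ ∃ hE : ∀ e ∈ E, #e = k,
        KGraph.IsQuasirandom ⟨E, hE⟩ (expectedDegree n k p)) ≤ 4 / n := by
  have p_nonneg := h.prob_nonneg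
  have p_le := h.prob_le_one
  refine (binomialProb_mono p_nonneg p_le fun E hE not_isQuasirandom ↦ ?_).trans
    ((binomialProb_or_le p_nonneg p_le).trans <| (add_le_add
      (binomialProb_lt_card_incidentEdges_singleton_le h) <|
      (binomialProb_or_le p_nonneg p_le).trans <| add_le_add
        (binomialProb_exists_card_incidentEdges_lt_le h)
        (binomialProb_exists_cover_ratio_pow_lt_le h)).trans_eq (by ring))
  contrapose! not_isQuasirandom
  obtain ⟨degree, incident, cover⟩ := not_isQuasirandom
  exact ⟨fun e he ↦ (mem_powersetCard.1 (hE he)).2, degree, incident, cover⟩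

lemma one_sub_le_ghProb_isExpanding :
    1 - 4 / n ≤ ghProb n k p (fun G ↦ G.IsExpanding (1 / 2 ^ 49)) := by
  have typical : 1 - 4 / n ≤ ghProb n k p (fun G ↦ G.IsQuasirandom (expectedDegree n k p)) := by
    rw [ghProb_eq_binomialProb]
    linarith [binomialProb_not_isQuasirandom_le h, binomialProb_add_binomialProb_not
      (powersetCard k (univ : Finset (Fin n))) p fun E ↦
        ∃ hE : ∀ e ∈ E, #e = k, KGraph.IsQuasirandom ⟨E, hE⟩ (expectedDegree n k p)]
  exact typical.trans (ghProb_mono h.prob_nonneg h.prob_le_one fun _ hG ↦ hG.isExpanding h)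

end Typicality

open Filter in
theorem whp_Gknp_isExpanding_general :
    ∃ ξ : ℝ, 0 < ξ ∧ ξ ≤ 1 ∧
      ∀ (k : ℕ → ℕ) (p : ℕ → ℝ),
        (∀ᶠ n : ℕ in atTop, 10 * Real.log n ≤ k n) →
        (∀ᶠ n : ℕ in atTop, p n * ((n - 1).choose (k n - 1) : ℕ) ≤ (n : ℝ) / k n) →
        (∀ᶠ n : ℕ in atTop, 16 * Real.log n ^ 3 ≤ p n * ((n - 1).choose (k n - 1) : ℕ)) →
        Tendsto (fun n ↦ ghProb n (k n) (p n) (fun G ↦ G.IsExpanding ξ)) atTop (nhds 1) := by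
  refine ⟨1 / 2 ^ 49, by norm_num, by norm_num, fun k p uniformity_ge degree_le degree_ge ↦ ?_⟩
  have log_ge : ∀ᶠ n : ℕ in atTop, 100 ≤ Real.log n :=
    (Real.tendsto_log_atTop.comp tendsto_natCast_atTop_atTop).eventually_ge_atTop 100
  have admissible : ∀ᶠ n in atTop, Admissible n (k n) (expectedDegree n (k n) (p n)) := by
    filter_upwards [log_ge, uniformity_ge, degree_le, degree_ge] with n hlog hk hle hge
    exact ⟨hlog, hk, hge, (le_div_iff₀ (by linarith)).1 hle⟩
  have lower_tendsto : Tendsto (fun n : ℕ ↦ 1 - 4 / (n : ℝ)) atTop (nhds 1) := by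
    simpa using (tendsto_const_div_atTop_nhds_zero_nat (4 : ℝ)).const_sub 1
  refine tendsto_of_tendsto_of_tendsto_of_le_of_le' lower_tendsto tendsto_const_nhds ?_ ?_
  · filter_upwards [admissible] with n h using one_sub_le_ghProb_isExpanding h
  · filter_upwards [admissible] with n h using ghProb_le_one h.prob_nonneg h.prob_le_one _

/-- there is a universal `ξ ∈ (0,1]` such that whp `G^k(n,p)` is `ξ`-expanding,
whenever `k = ω(log n)` and `n/k ≥ p C(n-1,k-1) = ω(log³ n)`. -/
theorem whp_Gknp_isExpanding :
    ∃ ξ : ℝ, 0 < ξ ∧ ξ ≤ 1 ∧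
      ∀ (k : ℕ → ℕ) (p : ℕ → ℝ), (∀ n, 0 < p n) →
        Filter.Tendsto (fun n => (k n : ℝ) / Real.log n) Filter.atTop Filter.atTop →
        (∀ᶠ n in Filter.atTop,
          p n * (((n - 1).choose (k n - 1) : ℕ) : ℝ) ≤ (n : ℝ) / k n) →
        Filter.Tendsto
          (fun n => p n * (((n - 1).choose (k n - 1) : ℕ) : ℝ) / Real.log n ^ 3)
          Filter.atTop Filter.atTop →
        Filter.Tendsto
          (fun n => ghProb n (k n) (p n) (fun G => G.IsExpanding ξ))
          Filter.atTop (nhds 1) := by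
  obtain ⟨ξ, hξ0, hξ1, expanding⟩ := whp_Gknp_isExpanding_general
  have log_pos : ∀ᶠ n : ℕ in Filter.atTop, 0 < Real.log n :=
    (Real.tendsto_log_atTop.comp tendsto_natCast_atTop_atTop).eventually_gt_atTop 0
  refine ⟨ξ, hξ0, hξ1, fun k p _ hk hle hge ↦ expanding k p ?_ hle ?_⟩
  · exact eventually_const_mul_le_of_tendsto_div_atTop hk log_pos 10
  · exact eventually_const_mul_le_of_tendsto_div_atTop hge (log_pos.mono fun _ h ↦ pow_pos h 3) 16
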